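/- arXiv:2308.06976 — 2 statements merged into one kernel-verified Lean document; each statement's English description precedes it below -/
import Mathlib

section
/- Let n ≥ 1 be an integer, 0 < λ < n+1, 1 < p ≤ q < ∞, and let α, β ∈ ℝ satisfy α < 1/p', β < 1/q, α + β ≥ 0 and 1/q = 1/p − (n+1−(α+β+λ))/(n+1). Then there exists a constant C > 0 such that for every nonnegative measurable function f on ℝ^{n+1}_+, (∫_{ℝ^{n+1}_+} z^{−βq} (E_λ f(y,z))^q dy dz)^{1/q} ≤ C · (∫_{ℝ^{n+1}_+} t^{αp} f(x,t)^p dx dt)^{1/p}, with both sides interpreted in [0,∞]. -/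
open MeasureTheory ENNReal

noncomputable section

/-- The upper half space `ℝ^{n+1}_+ = {(x,t) : t > 0}`. -/
def upperHalf (n : ℕ) : Set (EuclideanSpace ℝ (Fin n) × ℝ) := {X | 0 < X.2}

/-- The Euclidean distance `|(x,t)-(y,z)|` on `ℝ^n × ℝ`. -/
def hsDist {n : ℕ} (X Y : EuclideanSpace ℝ (Fin n) × ℝ) : ℝ :=
  Real.sqrt (‖X.1 - Y.1‖ ^ 2 + (X.2 - Y.2) ^ 2)

/-- The singular integral operator `E_λ f (Y) = ∫_{ℝ^{n+1}_+} f(X) |X-Y|^{-λ} dX`,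
interpreted in `[0,∞]`. -/
def Elam (n : ℕ) (lam : ℝ) (f : EuclideanSpace ℝ (Fin n) × ℝ → ℝ)
    (Y : EuclideanSpace ℝ (Fin n) × ℝ) : ℝ≥0∞ :=
  ∫⁻ X in upperHalf n, ENNReal.ofReal (f X) * ENNReal.ofReal (hsDist X Y) ^ (-lam)


section radial
variable {V : Type*} [NormedAddCommGroup V] [NormedSpace ℝ V] [FiniteDimensional ℝ V]
  [MeasurableSpace V] [BorelSpace V] (μ : Measure V) [μ.IsAddHaarMeasure]

theorem sw_scale (Φ : V → ℝ≥0∞) (hΦ : Measurable Φ) (x : V) (R : ℝ) (hR : 0 < R) :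
    ∫⁻ y, Φ (R⁻¹ • (x - y)) ∂μ
      = ENNReal.ofReal (R ^ (Module.finrank ℝ V : ℝ)) * ∫⁻ y, Φ y ∂μ := by
  rw [lintegral_sub_left_eq_self (fun y => Φ (R⁻¹ • y)) x]
  rw [← lintegral_map (f := Φ) (g := fun y => R⁻¹ • y) hΦ (by fun_prop),
    Measure.map_addHaar_smul μ (inv_ne_zero hR.ne'), lintegral_smul_measure, smul_eq_mul]
  congr 2
  rw [Real.rpow_natCast, inv_pow, inv_inv, abs_of_pos (by positivity)]

theorem sw_near [Nontrivial V] (s : ℝ) (hs : s < Module.finrank ℝ V) :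
    ∃ C : ℝ≥0∞, C ≠ ∞ ∧ ∀ x : V, ∀ R : ℝ, 0 < R →
      ∫⁻ y, ENNReal.ofReal (if ‖x - y‖ < R then ‖x - y‖ ^ (-s) else 0) ∂μ
        ≤ C * ENNReal.ofReal (R ^ ((Module.finrank ℝ V : ℝ) - s)) := by
  have hm : Measurable fun u : V => ENNReal.ofReal (if ‖u‖ < 1 then ‖u‖ ^ (-s) else 0) := by
    refine ENNReal.measurable_ofReal.comp (Measurable.ite ?_ (by fun_prop) (by fun_prop))
    exact measurableSet_lt (by fun_prop) (by fun_prop)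
  refine ⟨∫⁻ u, ENNReal.ofReal (if ‖u‖ < 1 then ‖u‖ ^ (-s) else 0) ∂μ, ?_, ?_⟩
  · have h1 : IntegrableOn (fun x : V => (fun y : ℝ => y ^ (-s)) ‖x‖) (Metric.ball 0 1) μ := by
      refine (integrableOn_fun_norm_addHaar μ (f := fun y : ℝ => y ^ (-s))).2 ?_
      have h2 : IntegrableOn (fun y : ℝ => y ^ ((Module.finrank ℝ V : ℝ) - 1 - s))
          (Set.Ioo 0 1) := by
        rw [intervalIntegral.integrableOn_Ioo_rpow_iff zero_lt_one]; linarith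
      refine h2.congr_fun ?_ measurableSet_Ioo
      intro y hy
      have : 0 < y := hy.1
      simp only [smul_eq_mul]
      rw [← Real.rpow_natCast, ← Real.rpow_add this]
      congr 1
      rw [Nat.cast_sub Module.finrank_pos]; simp; ring
    have h3 := h1.lintegral_lt_top
    rw [← lintegral_indicator measurableSet_ball] at h3
    refine (lt_of_eq_of_lt (lintegral_congr fun u => ?_) h3).ne
    by_cases hu : ‖u‖ < 1 <;> simp [Set.indicator, hu]
  · intro x R hR
    rw [sub_eq_add_neg, Real.rpow_add hR, ENNReal.ofReal_mul (by positivity), mul_comm]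
    rw [mul_right_comm, ← sw_scale μ _ hm x R hR, ← lintegral_mul_const' _ _ ENNReal.ofReal_ne_top]
    refine lintegral_mono fun y => ?_
    rw [← ENNReal.ofReal_mul (by split_ifs <;> positivity)]
    refine ENNReal.ofReal_le_ofReal ?_
    have e : ‖R⁻¹ • (x - y)‖ = R⁻¹ * ‖x - y‖ := by
      rw [norm_smul, Real.norm_of_nonneg (by positivity)]
    rw [e]
    by_cases h : ‖x - y‖ < R
    · have h' : R⁻¹ * ‖x - y‖ < 1 := by rw [inv_mul_lt_iff₀ hR]; simpa
      rw [if_pos h, if_pos h', Real.mul_rpow (by positivity) (by positivity), Real.inv_rpow hR.le]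
      field_simp; rfl
    · rw [if_neg h]; split_ifs <;> positivity

theorem sw_far (s : ℝ) (hs : Module.finrank ℝ V < s) :
    ∃ C : ℝ≥0∞, C ≠ ∞ ∧ ∀ x : V, ∀ R : ℝ, 0 < R →
      ∫⁻ y, ENNReal.ofReal (if R ≤ ‖x - y‖ then ‖x - y‖ ^ (-s) else 0) ∂μ
        ≤ C * ENNReal.ofReal (R ^ ((Module.finrank ℝ V : ℝ) - s)) := by
  have hs0 : 0 < s := lt_of_le_of_lt (Nat.cast_nonneg _) hs
  have hm : Measurable fun u : V => ENNReal.ofReal (if 1 ≤ ‖u‖ then ‖u‖ ^ (-s) else 0) := by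
    refine ENNReal.measurable_ofReal.comp (Measurable.ite ?_ (by fun_prop) (by fun_prop))
    exact measurableSet_le (by fun_prop) (by fun_prop)
  refine ⟨∫⁻ u, ENNReal.ofReal (if 1 ≤ ‖u‖ then ‖u‖ ^ (-s) else 0) ∂μ, ?_, ?_⟩
  · have h3 := finite_integral_one_add_norm (μ := μ) hs
    have h4 : ENNReal.ofReal (2 ^ s) * ∫⁻ x : V, ENNReal.ofReal ((1 + ‖x‖) ^ (-s)) ∂μ < ∞ :=
      ENNReal.mul_lt_top ENNReal.ofReal_lt_top h3
    rw [← lintegral_const_mul _ (by fun_prop)] at h4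
    refine (lt_of_le_of_lt (lintegral_mono fun u => ?_) h4).ne
    rw [← ENNReal.ofReal_mul (by positivity)]
    refine ENNReal.ofReal_le_ofReal ?_
    split_ifs with hu
    · have : (‖u‖) ^ (-s) = 2 ^ s * (2 * ‖u‖) ^ (-s) := by
        rw [Real.mul_rpow (by positivity) (by positivity), ← mul_assoc,
          ← Real.rpow_add (by norm_num)]; simp
      rw [this]
      refine mul_le_mul_of_nonneg_left ?_ (by positivity)
      exact Real.rpow_le_rpow_of_nonpos (by positivity) (by linarith) (by linarith)
    · positivity
  · intro x R hR
    rw [sub_eq_add_neg, Real.rpow_add hR, ENNReal.ofReal_mul (by positivity), mul_comm]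
    rw [mul_right_comm, ← sw_scale μ _ hm x R hR, ← lintegral_mul_const' _ _ ENNReal.ofReal_ne_top]
    refine lintegral_mono fun y => ?_
    rw [← ENNReal.ofReal_mul (by split_ifs <;> positivity)]
    refine ENNReal.ofReal_le_ofReal ?_
    have e : ‖R⁻¹ • (x - y)‖ = R⁻¹ * ‖x - y‖ := by
      rw [norm_smul, Real.norm_of_nonneg (by positivity)]
    rw [e]
    by_cases h : R ≤ ‖x - y‖
    · have h' : 1 ≤ R⁻¹ * ‖x - y‖ := by rw [le_inv_mul_iff₀ hR]; simpa
      rw [if_pos h, if_pos h', Real.mul_rpow (by positivity) (by positivity), Real.inv_rpow hR.le]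
      field_simp; rfl
    · rw [if_neg h]; split_ifs <;> positivity

/-- `∫ max(|x-y|, τ)^{-s} dy ≤ C τ^{d-s}`. -/
theorem sw_max [Nontrivial V] (s : ℝ) (hs : Module.finrank ℝ V < s) :
    ∃ C : ℝ≥0∞, C ≠ ∞ ∧ ∀ x : V, ∀ R : ℝ, 0 < R →
      ∫⁻ y, ENNReal.ofReal ((max ‖x - y‖ R) ^ (-s)) ∂μ
        ≤ C * ENNReal.ofReal (R ^ ((Module.finrank ℝ V : ℝ) - s)) := by
  obtain ⟨C₁, h₁, H₁⟩ := sw_far μ s hs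
  obtain ⟨C₂, h₂, H₂⟩ := sw_near μ 0 (by exact_mod_cast Module.finrank_pos (R := ℝ) (M := V))
  refine ⟨C₁ + C₂, by simp [h₁, h₂], fun x R hR => ?_⟩
  have hm : Measurable fun y : V => ENNReal.ofReal (if R ≤ ‖x - y‖ then ‖x - y‖ ^ (-s) else 0) := by
    refine ENNReal.measurable_ofReal.comp (Measurable.ite ?_ (by fun_prop) (by fun_prop))
    exact measurableSet_le (by fun_prop) (by fun_prop)
  calc _ ≤ ∫⁻ y, (ENNReal.ofReal (if R ≤ ‖x - y‖ then ‖x - y‖ ^ (-s) else 0) +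
          ENNReal.ofReal (R ^ (-s)) *
          ENNReal.ofReal (if ‖x - y‖ < R then ‖x - y‖ ^ (-(0:ℝ)) else 0)) ∂μ := by
        refine lintegral_mono fun y => ?_
        by_cases h : R ≤ ‖x - y‖
        · simp [h]
        · push Not at h
          simp [h, h.le]
    _ ≤ _ := by
        rw [lintegral_add_left hm, lintegral_const_mul' _ _ ENNReal.ofReal_ne_top, add_mul]
        refine add_le_add (H₁ x R hR) ?_
        refine (mul_le_mul_right (H₂ x R hR) _).trans ?_
        rw [mul_left_comm, ← ENNReal.ofReal_mul (by positivity), ← Real.rpow_add hR]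
        refine le_of_eq ?_
        congr 3; ring
end radial

/-- one dimensional computation -/
theorem sw_oneD (m b : ℝ) (hm0 : 0 < m) (hm : m < 1) (hb : b < 1) (hmb : 1 < m + b) :
    ∃ C : ℝ≥0∞, C ≠ ∞ ∧ ∀ t : ℝ, 0 < t →
      ∫⁻ z in Set.Ioi (0:ℝ), ENNReal.ofReal (|t - z| ^ (-m) * z ^ (-b))
        ≤ C * ENNReal.ofReal (t ^ (1 - m - b)) := by
  obtain ⟨C₁, h₁, H₁⟩ := sw_near (volume : Measure ℝ) b (by simpa)
  obtain ⟨C₂, h₂, H₂⟩ := sw_near (volume : Measure ℝ) m (by simpa)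
  obtain ⟨C₃, h₃, H₃⟩ := sw_far (volume : Measure ℝ) (m + b) (by simpa)
  simp only [Module.finrank_self, Nat.cast_one, Real.norm_eq_abs] at H₁ H₂ H₃
  set K₁ := ENNReal.ofReal ((2:ℝ) ^ m)
  set K₂ := ENNReal.ofReal ((2:ℝ) ^ |b|)
  have h2 : ENNReal.ofReal ((2:ℝ) ^ (1 - m)) ≠ ∞ := ENNReal.ofReal_ne_top
  refine ⟨K₁ * C₁ + (K₂ * C₂ * ENNReal.ofReal ((2:ℝ) ^ (1 - m)) + K₁ * C₃), ?_, fun t ht => ?_⟩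
  · have a1 : K₁ ≠ ∞ := ENNReal.ofReal_ne_top
    have a2 : K₂ ≠ ∞ := ENNReal.ofReal_ne_top
    finiteness
  have m1 : Measurable fun z : ℝ => K₁ * ENNReal.ofReal (t ^ (-m)) *
      ENNReal.ofReal (if |0 - z| < t then |0 - z| ^ (-b) else 0) := by
    refine Measurable.const_mul (ENNReal.measurable_ofReal.comp
      (Measurable.ite ?_ (by fun_prop) (by fun_prop))) _
    exact measurableSet_lt (by fun_prop) (by fun_prop)
  have m2 : Measurable fun z : ℝ => K₂ * ENNReal.ofReal (t ^ (-b)) *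
      ENNReal.ofReal (if |t - z| < 2 * t then |t - z| ^ (-m) else 0) := by
    refine Measurable.const_mul (ENNReal.measurable_ofReal.comp
      (Measurable.ite ?_ (by fun_prop) (by fun_prop))) _
    exact measurableSet_lt (by fun_prop) (by fun_prop)
  calc _ ≤ ∫⁻ z in Set.Ioi (0:ℝ), ((K₁ * ENNReal.ofReal (t ^ (-m)) *
            ENNReal.ofReal (if |0 - z| < t then |0 - z| ^ (-b) else 0)) +
          ((K₂ * ENNReal.ofReal (t ^ (-b)) *
            ENNReal.ofReal (if |t - z| < 2 * t then |t - z| ^ (-m) else 0)) +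
          K₁ * ENNReal.ofReal (if t ≤ |0 - z| then |0 - z| ^ (-(m+b)) else 0))) := by
        refine setLIntegral_mono' measurableSet_Ioi fun z hz => ?_
        have hz : 0 < z := hz
        have e0 : |0 - z| = z := by rw [zero_sub, abs_neg, abs_of_pos hz]
        rw [e0]
        rcases lt_or_ge z (t/2) with hA | hA
        · refine le_trans ?_ (le_add_of_nonneg_right zero_le)
          rw [if_pos (by linarith), ← ENNReal.ofReal_mul (by positivity),
            ← ENNReal.ofReal_mul (by positivity)]
          refine ENNReal.ofReal_le_ofReal (mul_le_mul_of_nonneg_right ?_ (by positivity))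
          have : (2:ℝ) ^ m * t ^ (-m) = (t / 2) ^ (-m) := by
            rw [Real.div_rpow ht.le (by norm_num), Real.rpow_neg (by norm_num : (0:ℝ) ≤ 2)]
            field_simp
          rw [this]
          refine Real.rpow_le_rpow_of_nonpos (by positivity) ?_ (by linarith)
          exact le_trans (by linarith) (le_abs_self _)
        rcases le_or_gt z (2 * t) with hB | hB
        · refine le_trans ?_ (le_add_of_nonneg_left zero_le)
          refine le_trans ?_ (le_add_of_nonneg_right zero_le)
          rw [if_pos (by rw [abs_lt]; constructor <;> linarith), ← ENNReal.ofReal_mul (by positivity),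
            ← ENNReal.ofReal_mul (by positivity)]
          refine ENNReal.ofReal_le_ofReal ?_
          rw [mul_comm]
          refine (mul_le_mul_of_nonneg_right ?_ (by positivity))
          have : z ^ (-b) = (z/t) ^ (-b) * t ^ (-b) := by
            rw [Real.div_rpow hz.le ht.le]; field_simp
          rw [this]
          refine (mul_le_mul_of_nonneg_right ?_ (by positivity))
          rcases le_total 0 b with h0 | h0
          · rw [abs_of_nonneg h0, show (2:ℝ)^b = (1/2)^(-b) by
              rw [one_div, Real.inv_rpow (by norm_num), Real.rpow_neg (by norm_num), inv_inv]]
            refine Real.rpow_le_rpow_of_nonpos (by positivity) ?_ (by linarith)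
            rw [le_div_iff₀ ht]; linarith
          · rw [abs_of_nonpos h0]
            refine Real.rpow_le_rpow (by positivity) ?_ (by linarith)
            rw [div_le_iff₀ ht]; linarith
        · refine le_trans ?_ (le_add_of_nonneg_left zero_le)
          refine le_trans ?_ (le_add_of_nonneg_left zero_le)
          rw [if_pos (by linarith), ← ENNReal.ofReal_mul (by positivity)]
          refine ENNReal.ofReal_le_ofReal ?_
          rw [neg_add, Real.rpow_add hz, ← mul_assoc]
          refine (mul_le_mul_of_nonneg_right ?_ (by positivity))
          have : (2:ℝ) ^ m * z ^ (-m) = (z / 2) ^ (-m) := by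
            rw [Real.div_rpow hz.le (by norm_num), Real.rpow_neg (by norm_num : (0:ℝ) ≤ 2)]
            field_simp
          rw [this]
          refine Real.rpow_le_rpow_of_nonpos (by positivity) ?_ (by linarith)
          rw [abs_sub_comm]
          exact le_trans (by linarith) (le_abs_self _)
    _ ≤ _ := by
        refine (setLIntegral_le_lintegral _ _).trans ?_
        rw [lintegral_add_left m1, lintegral_add_left m2, lintegral_const_mul' _ _ (by finiteness),
          lintegral_const_mul' _ _ (by finiteness), lintegral_const_mul' _ _ (by finiteness),
          add_mul, add_mul]
        refine add_le_add ?_ (add_le_add ?_ ?_)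
        · refine (mul_le_mul_right (H₁ 0 t ht) _).trans (le_of_eq ?_)
          rw [show 1 - m - b = -m + (1 - b) by ring, Real.rpow_add ht,
            ENNReal.ofReal_mul (by positivity)]
          ring
        · refine (mul_le_mul_right (H₂ t (2 * t) (by linarith)) _).trans (le_of_eq ?_)
          rw [show 1 - m - b = -b + (1 - m) by ring, Real.rpow_add ht,
            ENNReal.ofReal_mul (by positivity), Real.mul_rpow (by norm_num) ht.le,
            ENNReal.ofReal_mul (by positivity)]
          ring
        · refine (mul_le_mul_right (H₃ 0 t ht) _).trans (le_of_eq ?_)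
          rw [show 1 - m - b = 1 - (m + b) by ring]
          ring

theorem sw_duality {E : Type*} [MeasurableSpace E] (μ : Measure E) [SigmaFinite μ]
    (p q : ℝ) (hp : 1 < p) (hq : 1 < q) (k : E → E → ℝ)
    (C : ℝ≥0∞) (hC0 : C ≠ 0)
    (H : ∀ F G : E → ℝ, Measurable F → Measurable G → (∀ x, 0 ≤ F x) → (∀ x, 0 ≤ G x) →
      ∫⁻ x, ENNReal.ofReal (F x) ∂μ ≤ 1 → ∫⁻ x, ENNReal.ofReal (G x) ∂μ ≤ 1 →
      ∫⁻ y, ∫⁻ x, ENNReal.ofReal (F x ^ (1 / p) * G y ^ (1 - 1 / q) * k x y) ∂μ ∂μ ≤ C)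
    (φ : E → ℝ) (hφ : Measurable φ) (hφ0 : ∀ x, 0 ≤ φ x) :
    (∫⁻ y, (∫⁻ x, ENNReal.ofReal (φ x * k x y) ∂μ) ^ q ∂μ) ^ (1 / q)
      ≤ C * (∫⁻ x, ENNReal.ofReal (φ x) ^ p ∂μ) ^ (1 / p) := by
  have hp0 : 0 < p := by linarith
  have hq0 : 0 < q := by linarith
  have hq1 : 0 < 1 - 1 / q := by
    rw [sub_pos, div_lt_one hq0]; exact hq
  set A := ∫⁻ x, ENNReal.ofReal (φ x) ^ p ∂μ with hA
  rcases eq_or_ne A ∞ with hAt | hAt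
  · rw [hAt, ENNReal.top_rpow_of_pos (by positivity), ENNReal.mul_top hC0]; exact le_top
  rcases eq_or_ne A 0 with hA0 | hA0
  · have h0 : ∀ᵐ x ∂μ, φ x = 0 := by
      rw [hA, lintegral_eq_zero_iff (by fun_prop)] at hA0
      filter_upwards [hA0] with x hx
      have : ENNReal.ofReal (φ x) = 0 := by
        simpa [ENNReal.rpow_eq_zero_iff, hp0, hp0.le, not_lt.2 hp0.le] using hx
      exact le_antisymm (ENNReal.ofReal_eq_zero.1 this) (hφ0 x)
    have h1 : ∀ y, ∫⁻ x, ENNReal.ofReal (φ x * k x y) ∂μ = 0 := by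
      intro y
      rw [lintegral_congr_ae (g := fun _ => 0)]
      · simp
      · filter_upwards [h0] with x hx
        simp [hx]
    simp [h1, hq0, ENNReal.zero_rpow_of_pos]
  set a := A.toReal with ha
  have ha0 : 0 < a := ENNReal.toReal_pos hA0 hAt
  have hAa : A = ENNReal.ofReal a := (ENNReal.ofReal_toReal hAt).symm
  set T : E → ℝ≥0∞ := fun y => ∫⁻ x, ENNReal.ofReal (φ x * k x y) ∂μ with hT
  by_contra hcon
  push Not at hcon
  have hL : (C * A ^ (1 / p)) ^ q < ∫⁻ y, T y ^ q ∂μ := by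
    have := ENNReal.rpow_lt_rpow hcon hq0
    rwa [← ENNReal.rpow_mul, one_div_mul_cancel hq0.ne', ENNReal.rpow_one] at this
  rw [lintegral_eq_nnreal] at hL
  simp only [lt_iSup_iff] at hL
  obtain ⟨g, hg, hgL⟩ := hL
  rw [SimpleFunc.map_lintegral, ← SimpleFunc.map_lintegral, ← SimpleFunc.lintegral_eq_lintegral] at hgL
  obtain ⟨h, hh, hht, hhL⟩ := SimpleFunc.exists_lt_lintegral_simpleFunc_of_lt_lintegral hgL
  set B := ∫⁻ x, (h x : ℝ≥0∞) ∂μ with hB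
  have hB0 : B ≠ 0 := (lt_of_le_of_lt zero_le hhL).ne'
  set b := B.toReal with hb
  have hb0 : 0 < b := ENNReal.toReal_pos hB0 hht.ne
  have hBb : B = ENNReal.ofReal b := (ENNReal.ofReal_toReal hht.ne).symm
  have hmeas : Measurable h := h.measurable
  have hT' : ∀ y, (h y : ℝ≥0∞) ≤ T y ^ q := fun y => (ENNReal.coe_le_coe.2 (hh y)).trans (hg y)
  have key := H (fun x => φ x ^ p / a) (fun y => (h y : ℝ) / b) (by fun_prop) (by fun_prop)
    (fun x => by have := hφ0 x; positivity) (fun y => by positivity) (by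
      simp only [div_eq_mul_inv]
      rw [lintegral_congr (fun x => ENNReal.ofReal_mul (Real.rpow_nonneg (hφ0 x) p)),
        lintegral_mul_const' _ _ ENNReal.ofReal_ne_top,
        lintegral_congr (fun x => (ENNReal.ofReal_rpow_of_nonneg (hφ0 x) hp0.le).symm), ← hA, hAa,
        ← ENNReal.ofReal_mul ha0.le, mul_inv_cancel₀ ha0.ne']; simp) (by
      simp only [div_eq_mul_inv]
      rw [lintegral_congr (fun x => ENNReal.ofReal_mul (NNReal.coe_nonneg (h x))),
        lintegral_mul_const' _ _ ENNReal.ofReal_ne_top]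
      simp only [ENNReal.ofReal_coe_nnreal]
      rw [← hB, hBb, ← ENNReal.ofReal_mul hb0.le, mul_inv_cancel₀ hb0.ne']; simp)
  have e1 : ∀ y, ∫⁻ x, ENNReal.ofReal ((φ x ^ p / a) ^ (1 / p) * ((h y : ℝ) / b) ^ (1 - 1 / q) * k x y) ∂μ
      = ENNReal.ofReal (a ^ (-(1 / p)) * b ^ (-(1 - 1 / q))) *
        ((h y : ℝ≥0∞) ^ (1 - 1 / q) * T y) := by
    intro y
    rw [hT, ← lintegral_const_mul' _ _ (ENNReal.rpow_ne_top_of_nonneg hq1.le ENNReal.coe_ne_top),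
      ← lintegral_const_mul' _ _ ENNReal.ofReal_ne_top]
    refine lintegral_congr fun x => ?_
    rw [← ENNReal.ofReal_coe_nnreal, ENNReal.ofReal_rpow_of_nonneg (by positivity) hq1.le,
      ← ENNReal.ofReal_mul (by positivity), ← ENNReal.ofReal_mul (by positivity)]
    congr 1
    rw [Real.div_rpow (Real.rpow_nonneg (hφ0 x) p) ha0.le, ← Real.rpow_mul (hφ0 x),
      mul_one_div_cancel hp0.ne', Real.rpow_one, Real.div_rpow (by positivity) hb0.le,
      Real.rpow_neg ha0.le, Real.rpow_neg hb0.le]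
    field_simp
  rw [lintegral_congr e1, lintegral_const_mul' _ _ ENNReal.ofReal_ne_top] at key
  have e2 : B ≤ ∫⁻ y, (h y : ℝ≥0∞) ^ (1 - 1 / q) * T y ∂μ := by
    refine lintegral_mono fun y => ?_
    calc (h y : ℝ≥0∞) = (h y : ℝ≥0∞) ^ (1 - 1 / q) * (h y : ℝ≥0∞) ^ (1 / q) := by
          rw [← ENNReal.rpow_add_of_nonneg _ _ hq1.le (by positivity)]; simp
      _ ≤ _ := by
          refine mul_le_mul_right ?_ _
          have := ENNReal.rpow_le_rpow (hT' y) (by positivity : 0 ≤ 1 / q)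
          rwa [← ENNReal.rpow_mul, mul_one_div_cancel hq0.ne', ENNReal.rpow_one] at this
  have e3 : ENNReal.ofReal (a ^ (-(1 / p)) * b ^ (-(1 - 1 / q))) * B ≤ C :=
    (mul_le_mul_right e2 _).trans key
  have e4 : ENNReal.ofReal (b ^ (1 / q)) ≤ C * A ^ (1 / p) := by
    have := mul_le_mul_left e3 (A ^ (1 / p))
    refine le_trans (le_of_eq ?_) this
    rw [hBb, hAa, ENNReal.ofReal_rpow_of_nonneg ha0.le (by positivity),
      ← ENNReal.ofReal_mul (by positivity), ← ENNReal.ofReal_mul (by positivity)]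
    congr 1
    have : b ^ (1 / q) = b ^ (-(1 - 1 / q)) * b := by
      nth_rewrite 3 [← Real.rpow_one b]
      rw [← Real.rpow_add hb0]; congr 1; ring
    rw [this, Real.rpow_neg ha0.le]
    field_simp
  have e5 := ENNReal.rpow_le_rpow e4 hq0.le
  rw [ENNReal.ofReal_rpow_of_nonneg (by positivity) hq0.le, ← Real.rpow_mul hb0.le,
    one_div_mul_cancel hq0.ne', Real.rpow_one, ← hBb] at e5
  exact absurd hhL (not_lt.2 e5)

theorem sw_slice {α β γ : Type*} [MeasurableSpace α] [MeasurableSpace β] [MeasurableSpace γ]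
    {f : α × β → γ} (hf : Measurable f) (y : α) : Measurable fun x => f (y, x) :=
  hf.comp measurable_prodMk_left
section bil
variable {E : Type*} [MeasurableSpace E] (ν : Measure E) [SFinite ν]

theorem sw_intY (W : E → E → ℝ) (G : E → ℝ) (hG0 : ∀ y, 0 ≤ G y)
    (hG1 : ∫⁻ y, ENNReal.ofReal (G y) ∂ν ≤ 1) (C : ℝ≥0∞)
    (hC : ∀ᵐ y ∂ν, 0 < G y → ∫⁻ x, ENNReal.ofReal (W x y) ∂ν ≤ C) (hCt : C ≠ ∞) :
    ∫⁻ y, ∫⁻ x, ENNReal.ofReal (G y * W x y) ∂ν ∂ν ≤ C := by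
  calc _ ≤ ∫⁻ y, ENNReal.ofReal (G y) * C ∂ν := by
        refine lintegral_mono_ae ?_
        filter_upwards [hC] with y hy
        rcases (hG0 y).eq_or_lt with h | h
        · simp [← h]
        · simp_rw [ENNReal.ofReal_mul (hG0 y)]
          rw [lintegral_const_mul' _ _ ENNReal.ofReal_ne_top]
          exact mul_le_mul_right (hy h) _
    _ ≤ _ := by
        rw [lintegral_mul_const' _ _ hCt]
        exact (mul_le_mul_left hG1 _).trans (by simp)

theorem sw_intX (W : E → E → ℝ) (hW : Measurable (Function.uncurry W))
    (F : E → ℝ) (hF : Measurable F) (hF0 : ∀ y, 0 ≤ F y)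
    (hF1 : ∫⁻ y, ENNReal.ofReal (F y) ∂ν ≤ 1) (C : ℝ≥0∞)
    (hC : ∀ᵐ x ∂ν, 0 < F x → ∫⁻ y, ENNReal.ofReal (W x y) ∂ν ≤ C) (hCt : C ≠ ∞) :
    ∫⁻ y, ∫⁻ x, ENNReal.ofReal (F x * W x y) ∂ν ∂ν ≤ C := by
  rw [lintegral_lintegral_swap]
  · exact sw_intY ν (fun x y => W y x) F hF0 hF1 C hC hCt
  · refine Measurable.aemeasurable ?_
    have : Measurable fun z : E × E => W z.2 z.1 := hW.comp measurable_swap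
    change Measurable fun z : E × E => ENNReal.ofReal (F z.2 * W z.2 z.1)
    fun_prop

theorem sw_intFG (F G : E → ℝ) (hF0 : ∀ y, 0 ≤ F y) 
    (hF1 : ∫⁻ y, ENNReal.ofReal (F y) ∂ν ≤ 1) (hG0 : ∀ y, 0 ≤ G y)
    (hG1 : ∫⁻ y, ENNReal.ofReal (G y) ∂ν ≤ 1) :
    ∫⁻ y, ∫⁻ x, ENNReal.ofReal (F x * G y) ∂ν ∂ν ≤ 1 := by
  simp_rw [mul_comm (F _)]
  exact sw_intY ν (fun x _ => F x) G hG0 hG1 1 (.of_forall fun _ _ => hF1) (by simp)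
end bil

def swNear (N ρ c e : ℝ) : ℝ := if e < c ^ (-(1 / N)) then e ^ (-(N * ρ)) * c ^ (1 - ρ) else 0
def swFar (N θ c e : ℝ) : ℝ := if c ^ (-(1 / N)) ≤ e then e ^ (-(N * θ)) * c ^ (1 - θ) else 0

theorem swNear_nonneg (N ρ c e : ℝ) (hc : 0 ≤ c) (he : 0 ≤ e) : 0 ≤ swNear N ρ c e := by
  unfold swNear; split_ifs <;> positivity
theorem swFar_nonneg (N ρ c e : ℝ) (hc : 0 ≤ c) (he : 0 ≤ e) : 0 ≤ swFar N ρ c e := by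
  unfold swFar; split_ifs <;> positivity

theorem swNear_meas (N ρ : ℝ) : Measurable fun z : ℝ × ℝ => swNear N ρ z.1 z.2 := by
  unfold swNear
  refine Measurable.ite (measurableSet_lt (by fun_prop) (by fun_prop)) (by fun_prop) (by fun_prop)
theorem swFar_meas (N ρ : ℝ) : Measurable fun z : ℝ × ℝ => swFar N ρ z.1 z.2 := by
  unfold swFar
  refine Measurable.ite (measurableSet_le (by fun_prop) (by fun_prop)) (by fun_prop) (by fun_prop)

theorem sw_far_pt (N u v F G e : ℝ) (hu : u < 1) (hv0 : 0 < v) (hv : v < 1)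
    (hF : 0 < F) (hG : 0 < G) (he : 0 < e) (h : F ^ (-(1 / N)) ≤ e) :
    F ^ u * G ^ (1 - v) * e ^ (-(N * (1 - u + v))) ≤
      F * G + F * swFar N ((1 - u + v) / v) F e := by
  rw [swFar, if_pos h]
  set y := e ^ (-(N * ((1 - u + v) / v))) * F ^ (1 - (1 - u + v) / v) with hy
  have hy0 : 0 < y := by positivity
  have := Real.geom_mean_le_arith_mean2_weighted (w₁ := 1 - v) (w₂ := v) (p₁ := G) (p₂ := y)
    (by linarith) hv0.le hG.le hy0.le (by ring)
  have h2 : (1 - v) * G + v * y ≤ G + y := by nlinarith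
  have e1 : y ^ v = e ^ (-(N * (1 - u + v))) * F ^ (u - 1) := by
    rw [hy, Real.mul_rpow (by positivity) (by positivity), ← Real.rpow_mul he.le,
      ← Real.rpow_mul hF.le]
    congr 2 <;> field_simp <;> ring
  have e2 : F ^ u = F * F ^ (u - 1) := by
    rw [Real.rpow_sub_one hF.ne']; field_simp
  calc _ = F * (G ^ (1 - v) * y ^ v) := by rw [e1, e2]; ring
    _ ≤ F * (G + y) := mul_le_mul_of_nonneg_left (this.trans h2) hF.le
    _ = _ := by ring

theorem sw_near_pt (N u v F G e : ℝ) (hv : v < 1)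
    (hF : 0 < F) (hG : 0 < G) (he : 0 < e) (h : e < F ^ (-(1 / N))) (hGF : G ≤ F) :
    F ^ u * G ^ (1 - v) * e ^ (-(N * (1 - u + v))) ≤
      F * swNear N (1 - u + v) F e := by
  rw [swNear, if_pos h]
  have h1 : G ^ (1 - v) ≤ F ^ (1 - v) := Real.rpow_le_rpow hG.le hGF (by linarith)
  have e2 : F * F ^ (1 - (1 - u + v)) = F ^ u * F ^ (1 - v) := by
    nth_rewrite 1 [← Real.rpow_one F]
    rw [← Real.rpow_add hF, ← Real.rpow_add hF]; congr 1; ring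
  calc _ ≤ F ^ u * F ^ (1 - v) * e ^ (-(N * (1 - u + v))) := by gcongr
    _ = _ := by rw [← e2]; ring

theorem sw_hls_pt (N u v F G e : ℝ) (hN : 0 < N) (hu0 : 0 < u) (hu : u < 1) (hv0 : 0 < v) (hv : v < 1)
    (hF : 0 ≤ F) (hG : 0 ≤ G) (he : 0 ≤ e) :
    F ^ u * G ^ (1 - v) * e ^ (-(N * (1 - u + v))) ≤
      F * G + (F * swFar N ((1 - u + v) / v) F e + (G * swFar N ((1 - u + v) / (1 - u)) G e
        + (F * swNear N (1 - u + v) F e + G * swNear N (1 - u + v) G e))) := by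
  have a1 := mul_nonneg hF hG
  have a2 := mul_nonneg hF (swFar_nonneg N ((1 - u + v) / v) F e hF he)
  have a3 := mul_nonneg hG (swFar_nonneg N ((1 - u + v) / (1 - u)) G e hG he)
  have a4 := mul_nonneg hF (swNear_nonneg N (1 - u + v) F e hF he)
  have a5 := mul_nonneg hG (swNear_nonneg N (1 - u + v) G e hG he)
  have hne : N * (1 - u + v) ≠ 0 := (mul_pos hN (by linarith)).ne'
  rcases hF.eq_or_lt with h | hF'
  · have : F ^ u = 0 := by rw [← h, Real.zero_rpow hu0.ne']
    rw [this]; linarith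
  rcases hG.eq_or_lt with h | hG'
  · have : G ^ (1 - v) = 0 := by rw [← h, Real.zero_rpow (by linarith)]
    rw [this]; linarith
  rcases he.eq_or_lt with h | he'
  · have : e ^ (-(N * (1 - u + v))) = 0 := by rw [← h, Real.zero_rpow (by simpa using hne)]
    rw [this]; linarith
  have sym : F ^ u * G ^ (1 - v) * e ^ (-(N * (1 - u + v)))
     = G ^ (1 - v) * F ^ (1 - (1 - u)) * e ^ (-(N * (1 - (1 - v) + (1 - u)))) := by
    rw [show 1 - (1 - u) = u by ring, show 1 - (1 - v) + (1 - u) = 1 - u + v by ring]; ring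
  rcases le_or_gt (F ^ (-(1 / N))) e with h1 | h1
  · have := sw_far_pt N u v F G e hu hv0 hv hF' hG' he' h1
    linarith
  rcases le_or_gt (G ^ (-(1 / N))) e with h2 | h2
  · have := sw_far_pt N (1 - v) (1 - u) G F e (by linarith) (by linarith) (by linarith) hG' hF' he' h2
    rw [← sym, show 1 - (1 - v) + (1 - u) = 1 - u + v by ring] at this
    linarith
  rcases le_total G F with h3 | h3
  · have := sw_near_pt N u v F G e hv hF' hG' he' h1 h3
    linarith
  · have := sw_near_pt N (1 - v) (1 - u) G F e (by linarith) hG' hF' he' h2 h3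
    rw [← sym, show 1 - (1 - v) + (1 - u) = 1 - u + v by ring] at this
    linarith

section hls
variable {V : Type*} [NormedAddCommGroup V] [NormedSpace ℝ V] [FiniteDimensional ℝ V]
  [MeasurableSpace V] [BorelSpace V] [Nontrivial V] (μ : Measure V) [μ.IsAddHaarMeasure]

theorem sw_P (ρ : ℝ) (hρ : ρ < 1) : ∃ C : ℝ≥0∞, C ≠ ∞ ∧ ∀ x : V, ∀ c : ℝ, 0 < c →
    ∫⁻ y, ENNReal.ofReal (swNear (Module.finrank ℝ V) ρ c ‖x - y‖) ∂μ ≤ C := by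
  have hN : (0:ℝ) < Module.finrank ℝ V := by exact_mod_cast Module.finrank_pos
  set N : ℝ := ((Module.finrank ℝ V : ℕ) : ℝ)
  obtain ⟨C, hC, H⟩ := sw_near μ (N * ρ) (by change _ < N; nlinarith)
  refine ⟨C, hC, fun x c hc => ?_⟩
  have := mul_le_mul_left (H x (c ^ (-(1 / N))) (by positivity)) (ENNReal.ofReal (c ^ (1 - ρ)))
  rw [← lintegral_mul_const' _ _ ENNReal.ofReal_ne_top] at this
  refine le_trans (lintegral_mono fun y => ?_) (this.trans ?_)
  · rw [← ENNReal.ofReal_mul (by split_ifs <;> positivity)]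
    refine ENNReal.ofReal_le_ofReal ?_
    rw [swNear]; split_ifs <;> simp
  · rw [mul_assoc, ← ENNReal.ofReal_mul (by positivity), ← Real.rpow_mul hc.le, ← Real.rpow_add hc]
    refine le_of_eq ?_
    rw [show (-(1 / N) * (N - N * ρ) + (1 - ρ)) = 0 by field_simp; ring]
    simp

theorem sw_Q (ρ : ℝ) (hρ : 1 < ρ) : ∃ C : ℝ≥0∞, C ≠ ∞ ∧ ∀ x : V, ∀ c : ℝ, 0 < c →
    ∫⁻ y, ENNReal.ofReal (swFar (Module.finrank ℝ V) ρ c ‖x - y‖) ∂μ ≤ C := by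
  have hN : (0:ℝ) < Module.finrank ℝ V := by exact_mod_cast Module.finrank_pos
  set N : ℝ := ((Module.finrank ℝ V : ℕ) : ℝ)
  obtain ⟨C, hC, H⟩ := sw_far μ (N * ρ) (by change N < _; nlinarith)
  refine ⟨C, hC, fun x c hc => ?_⟩
  have := mul_le_mul_left (H x (c ^ (-(1 / N))) (by positivity)) (ENNReal.ofReal (c ^ (1 - ρ)))
  rw [← lintegral_mul_const' _ _ ENNReal.ofReal_ne_top] at this
  refine le_trans (lintegral_mono fun y => ?_) (this.trans ?_)
  · rw [← ENNReal.ofReal_mul (by split_ifs <;> positivity)]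
    refine ENNReal.ofReal_le_ofReal ?_
    rw [swFar]; split_ifs <;> simp
  · rw [mul_assoc, ← ENNReal.ofReal_mul (by positivity), ← Real.rpow_mul hc.le, ← Real.rpow_add hc]
    refine le_of_eq ?_
    rw [show (-(1 / N) * (N - N * ρ) + (1 - ρ)) = 0 by field_simp; ring]
    simp

theorem sw_hls (S : Set V) (u v : ℝ) (hu : u < 1) (hv0 : 0 < v) (hvu : v < u) :
    ∃ C : ℝ≥0∞, C ≠ ∞ ∧ ∀ F G : V → ℝ, Measurable F → Measurable G →
      (∀ x, 0 ≤ F x) → (∀ x, 0 ≤ G x) →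
      ∫⁻ x in S, ENNReal.ofReal (F x) ∂μ ≤ 1 → ∫⁻ x in S, ENNReal.ofReal (G x) ∂μ ≤ 1 →
      ∫⁻ y in S, ∫⁻ x in S, ENNReal.ofReal (F x ^ u * G y ^ (1 - v) *
        ‖x - y‖ ^ (-((Module.finrank ℝ V : ℝ) * (1 - u + v)))) ∂μ ∂μ ≤ C := by
  have hN : (0:ℝ) < Module.finrank ℝ V := by exact_mod_cast Module.finrank_pos
  obtain ⟨C₁, h₁, H₁⟩ := sw_Q μ ((1 - u + v) / v) (by rw [one_lt_div hv0]; linarith)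
  obtain ⟨C₂, h₂, H₂⟩ := sw_Q μ ((1 - u + v) / (1 - u)) (by rw [one_lt_div (by linarith)]; linarith)
  obtain ⟨C₃, h₃, H₃⟩ := sw_P μ (1 - u + v) (by linarith)
  set N : ℝ := ((Module.finrank ℝ V : ℕ) : ℝ)
  refine ⟨1 + (C₁ + (C₂ + (C₃ + C₃))), by finiteness, fun F G hF hG hF0 hG0 hF1 hG1 => ?_⟩
  have mFar : ∀ θ, Measurable (Function.uncurry fun x y : V => swFar N θ (F x) ‖x - y‖) := fun θ =>
    (swFar_meas N θ).comp (g := fun z : ℝ × ℝ => swFar N θ z.1 z.2)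
      (f := fun z : V × V => (F z.1, ‖z.1 - z.2‖)) (by fun_prop)
  have mFar' : ∀ θ, Measurable (Function.uncurry fun x y : V => swFar N θ (G y) ‖x - y‖) := fun θ =>
    (swFar_meas N θ).comp (g := fun z : ℝ × ℝ => swFar N θ z.1 z.2)
      (f := fun z : V × V => (G z.2, ‖z.1 - z.2‖)) (by fun_prop)
  have mNear : ∀ θ, Measurable (Function.uncurry fun x y : V => swNear N θ (F x) ‖x - y‖) := fun θ =>
    (swNear_meas N θ).comp (g := fun z : ℝ × ℝ => swNear N θ z.1 z.2)
      (f := fun z : V × V => (F z.1, ‖z.1 - z.2‖)) (by fun_prop)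
  have b0 := sw_intFG (μ.restrict S) F G hF0 hF1 hG0 hG1
  have b1 := sw_intX (μ.restrict S) (fun x y => swFar N ((1 - u + v) / v) (F x) ‖x - y‖)
    (mFar _) F hF hF0 hF1 C₁ (.of_forall fun x hx =>
      (setLIntegral_le_lintegral _ _).trans (H₁ x (F x) hx)) h₁
  have b2 := sw_intY (μ.restrict S) (fun x y => swFar N ((1 - u + v) / (1 - u)) (G y) ‖x - y‖)
    G hG0 hG1 C₂ (.of_forall fun x hx => by
      simp_rw [norm_sub_rev _ x]
      exact (setLIntegral_le_lintegral _ _).trans (H₂ x (G x) hx)) h₂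
  have b3 := sw_intX (μ.restrict S) (fun x y => swNear N (1 - u + v) (F x) ‖x - y‖)
    (mNear _) F hF hF0 hF1 C₃ (.of_forall fun x hx =>
      (setLIntegral_le_lintegral _ _).trans (H₃ x (F x) hx)) h₃
  have b4 := sw_intY (μ.restrict S) (fun x y => swNear N (1 - u + v) (G y) ‖x - y‖)
    G hG0 hG1 C₃ (.of_forall fun x hx => by
      simp_rw [norm_sub_rev _ x]
      exact (setLIntegral_le_lintegral _ _).trans (H₃ x (G x) hx)) h₃
  refine le_trans ?_ (add_le_add b0 (add_le_add b1 (add_le_add b2 (add_le_add b3 b4))))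
  have M0 : Measurable fun z : V × V => ENNReal.ofReal (F z.2 * G z.1) := by fun_prop
  have M1 : Measurable fun z : V × V =>
      ENNReal.ofReal (F z.2 * swFar N ((1 - u + v) / v) (F z.2) ‖z.2 - z.1‖) := by
    have := (mFar ((1 - u + v) / v)).comp measurable_swap
    simp only [Function.comp_def, Function.uncurry, Prod.fst_swap, Prod.snd_swap] at this
    fun_prop
  have M2 : Measurable fun z : V × V =>
      ENNReal.ofReal (G z.1 * swFar N ((1 - u + v) / (1 - u)) (G z.1) ‖z.2 - z.1‖) := by
    have := (mFar' ((1 - u + v) / (1 - u))).comp measurable_swap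
    simp only [Function.comp_def, Function.uncurry, Prod.fst_swap, Prod.snd_swap] at this
    fun_prop
  have M3 : Measurable fun z : V × V =>
      ENNReal.ofReal (F z.2 * swNear N (1 - u + v) (F z.2) ‖z.2 - z.1‖) := by
    have := (mNear (1 - u + v)).comp measurable_swap
    simp only [Function.comp_def, Function.uncurry, Prod.fst_swap, Prod.snd_swap] at this
    fun_prop
  rw [← lintegral_add_left M3.lintegral_prod_right', ← lintegral_add_left M2.lintegral_prod_right',
    ← lintegral_add_left M1.lintegral_prod_right', ← lintegral_add_left M0.lintegral_prod_right']
  refine lintegral_mono fun y => ?_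
  dsimp only
  rw [← lintegral_add_left (sw_slice M3 y),
    ← lintegral_add_left (sw_slice M2 y),
    ← lintegral_add_left (sw_slice M1 y),
    ← lintegral_add_left (sw_slice M0 y)]
  refine lintegral_mono fun x => ?_
  dsimp only
  have a1 := mul_nonneg (hF0 x) (hG0 y)
  have a2 := mul_nonneg (hF0 x) (swFar_nonneg N ((1 - u + v) / v) (F x) _ (hF0 x) (norm_nonneg (x - y)))
  have a3 := mul_nonneg (hG0 y) (swFar_nonneg N ((1 - u + v) / (1 - u)) (G y) _ (hG0 y) (norm_nonneg (x - y)))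
  have a4 := mul_nonneg (hF0 x) (swNear_nonneg N (1 - u + v) (F x) _ (hF0 x) (norm_nonneg (x - y)))
  have a5 := mul_nonneg (hG0 y) (swNear_nonneg N (1 - u + v) (G y) _ (hG0 y) (norm_nonneg (x - y)))
  rw [← ENNReal.ofReal_add (by positivity) (by positivity),
    ← ENNReal.ofReal_add (by positivity) (by positivity),
    ← ENNReal.ofReal_add (by positivity) (by positivity),
    ← ENNReal.ofReal_add (by positivity) (by positivity)]
  exact ENNReal.ofReal_le_ofReal
    (sw_hls_pt N u v (F x) (G y) ‖x - y‖ hN (by linarith) hu hv0 (by linarith) (hF0 x) (hG0 y) (norm_nonneg _))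
end hls

theorem hsDist_comm' {n : ℕ} (X Y : EuclideanSpace ℝ (Fin n) × ℝ) : hsDist X Y = hsDist Y X := by
  unfold hsDist
  rw [norm_sub_rev, ← neg_sub Y.2 X.2, neg_sq]

theorem hsDist_nonneg' {n : ℕ} (X Y : EuclideanSpace ℝ (Fin n) × ℝ) : 0 ≤ hsDist X Y :=
  Real.sqrt_nonneg _

theorem norm_le_hsDist {n : ℕ} (X Y : EuclideanSpace ℝ (Fin n) × ℝ) :
    max ‖X.1 - Y.1‖ |X.2 - Y.2| ≤ hsDist X Y := by
  unfold hsDist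
  refine max_le ?_ ?_
  · exact Real.le_sqrt_of_sq_le (by nlinarith [sq_nonneg (X.2 - Y.2)])
  · exact Real.le_sqrt_of_sq_le (by rw [sq_abs]; nlinarith [sq_nonneg ‖X.1 - Y.1‖])

theorem hsDist_meas (n : ℕ) : Measurable fun Z : (EuclideanSpace ℝ (Fin n) × ℝ) ×
    (EuclideanSpace ℝ (Fin n) × ℝ) => hsDist Z.1 Z.2 := by
  unfold hsDist; fun_prop

theorem upperHalf_meas (n : ℕ) : MeasurableSet (upperHalf n) :=
  measurableSet_lt measurable_const measurable_snd

theorem restrict_upperHalf (n : ℕ) : (volume : Measure (EuclideanSpace ℝ (Fin n) × ℝ)).restrict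
    (upperHalf n) = (volume : Measure (EuclideanSpace ℝ (Fin n))).prod
      ((volume : Measure ℝ).restrict (Set.Ioi 0)) := by
  have : upperHalf n = Set.univ ×ˢ Set.Ioi 0 := by ext; simp [upperHalf]
  rw [this, Measure.volume_eq_prod, ← Measure.prod_restrict, Measure.restrict_univ]

/-- weighted kernel -/
def swW (n : ℕ) (A B s : ℝ) (X Y : EuclideanSpace ℝ (Fin n) × ℝ) : ℝ :=
  X.2 ^ (-A) * Y.2 ^ (-B) * hsDist X Y ^ (-s)

theorem swW_meas (n : ℕ) (A B s : ℝ) : Measurable (Function.uncurry (swW n A B s)) := by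
  have := hsDist_meas n
  unfold swW Function.uncurry
  fun_prop

theorem swW_swap (n : ℕ) (A B s : ℝ) (X Y : EuclideanSpace ℝ (Fin n) × ℝ) :
    swW n A B s X Y = swW n B A s Y X := by
  unfold swW; rw [hsDist_comm']; ring

theorem sw_J (n : ℕ) (hn : 1 ≤ n) (A B s : ℝ) (hs : n < s) (hs1 : s - n < 1) (hB : B < 1)
    (hsB : 1 < s - n + B) (hsum : A + B + s = n + 1) :
    ∃ C : ℝ≥0∞, C ≠ ∞ ∧ ∀ X ∈ upperHalf n,
      ∫⁻ Y in upperHalf n, ENNReal.ofReal (swW n A B s X Y) ≤ C := by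
  have : Nonempty (Fin n) := ⟨⟨0, hn⟩⟩
  have hs0 : 0 < s := lt_of_le_of_lt (Nat.cast_nonneg n) hs
  obtain ⟨C₁, h₁, H₁⟩ := sw_max (volume : Measure (EuclideanSpace ℝ (Fin n))) s (by simpa using hs)
  obtain ⟨C₂, h₂, H₂⟩ := sw_oneD (s - n) B (by linarith) hs1 hB hsB
  simp only [finrank_euclideanSpace, Fintype.card_fin] at H₁
  refine ⟨C₁ * C₂, by finiteness, fun X hX => ?_⟩
  have ht : 0 < X.2 := hX
  have hm := swW_meas n A B s
  rw [restrict_upperHalf, lintegral_prod_symm' _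
    (sw_slice (f := fun Z => ENNReal.ofReal (swW n A B s Z.1 Z.2))
      (ENNReal.measurable_ofReal.comp hm) X)]
  have step : ∀ᵐ z ∂(volume : Measure ℝ).restrict (Set.Ioi 0),
      ∫⁻ y, ENNReal.ofReal (swW n A B s X (y, z)) ≤
        ENNReal.ofReal (X.2 ^ (-A)) * C₁ * ENNReal.ofReal (|X.2 - z| ^ (-(s - n)) * z ^ (-B)) := by
    have hne : ∀ᵐ z ∂(volume : Measure ℝ).restrict (Set.Ioi 0), z ≠ X.2 :=
      ae_restrict_of_ae (Measure.ae_ne volume X.2)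
    filter_upwards [hne, ae_restrict_mem measurableSet_Ioi] with z hz hz0
    have hz0 : 0 < z := hz0
    have hR : 0 < |X.2 - z| := abs_pos.2 (sub_ne_zero.2 hz.symm)
    calc _ ≤ ∫⁻ y, ENNReal.ofReal (X.2 ^ (-A) * z ^ (-B)) *
            ENNReal.ofReal ((max ‖X.1 - y‖ |X.2 - z|) ^ (-s)) := by
          refine lintegral_mono fun y => ?_
          rw [← ENNReal.ofReal_mul (by positivity)]
          refine ENNReal.ofReal_le_ofReal ?_
          unfold swW
          refine mul_le_mul_of_nonneg_left ?_ (by positivity)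
          exact Real.rpow_le_rpow_of_nonpos (lt_max_of_lt_right hR) (norm_le_hsDist X (y, z))
            (by linarith)
      _ ≤ _ := by
          rw [lintegral_const_mul' _ _ ENNReal.ofReal_ne_top]
          refine (mul_le_mul_right (H₁ X.1 _ hR) _).trans (le_of_eq ?_)
          rw [ENNReal.ofReal_mul (by positivity), ENNReal.ofReal_mul (by positivity), neg_sub]
          ring
  refine (lintegral_mono_ae step).trans ?_
  rw [lintegral_const_mul' _ _ (by finiteness)]
  refine (mul_le_mul_right (H₂ X.2 ht) _).trans (le_of_eq ?_)
  have : ENNReal.ofReal (X.2 ^ (-A)) * ENNReal.ofReal (X.2 ^ (1 - (s - n) - B)) = 1 := by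
    rw [← ENNReal.ofReal_mul (by positivity), ← Real.rpow_add ht,
      show -A + (1 - (s - n) - B) = 0 by linarith]; simp
  calc _ = C₁ * C₂ * (ENNReal.ofReal (X.2 ^ (-A)) * ENNReal.ofReal (X.2 ^ (1 - (s - n) - B))) := by
        ring
    _ = _ := by rw [this, mul_one]

theorem sw_hoelder_pt (u v ρ α β lam a b F G t z d : ℝ) (hu : u < 1) (hv0 : 0 < v) (hvu : v ≤ u)
    (hρ : ρ = 1 - u + v) (hab : a * v + b * (1 - u) = 0)
    (hF : 0 ≤ F) (hG : 0 ≤ G) (ht : 0 < t) (hz : 0 < z) (hd : 0 < d) :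
    F ^ u * G ^ (1 - v) * (t ^ (-α) * z ^ (-β) * d ^ (-lam)) ≤
      F * (t ^ (-(α / ρ - a)) * z ^ (-(β / ρ + a)) * d ^ (-(lam / ρ))) +
      (G * (t ^ (-(α / ρ - b)) * z ^ (-(β / ρ + b)) * d ^ (-(lam / ρ))) + F * G) := by
  have hρ0 : 0 < ρ := by linarith
  set W1 := t ^ (-(α / ρ - a)) * z ^ (-(β / ρ + a)) * d ^ (-(lam / ρ)) with hW1
  set W2 := t ^ (-(α / ρ - b)) * z ^ (-(β / ρ + b)) * d ^ (-(lam / ρ)) with hW2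
  have p1 : 0 < W1 := by positivity
  have p2 : 0 < W2 := by positivity
  rcases hF.eq_or_lt with h | hF'
  · rw [← h, Real.zero_rpow (by linarith)]; simp; positivity
  rcases hG.eq_or_lt with h | hG'
  · rw [← h, Real.zero_rpow (by linarith)]; simp; positivity
  have := Real.geom_mean_le_arith_mean3_weighted (w₁ := v) (w₂ := 1 - u) (w₃ := u - v)
    (p₁ := F * W1) (p₂ := G * W2) (p₃ := F * G) hv0.le (by linarith) (by linarith)
    (by positivity) (by positivity) (by positivity) (by ring)
  have q1 : 0 < F * W1 := by positivity
  have q2 : 0 < G * W2 := by positivity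
  have q3 : 0 < F * G := by positivity
  have e : F ^ u * G ^ (1 - v) * (t ^ (-α) * z ^ (-β) * d ^ (-lam)) =
      (F * W1) ^ v * (G * W2) ^ (1 - u) * (F * G) ^ (u - v) := by
    have c1 : t ^ (-α) = (t ^ (-(α / ρ - a))) ^ v * (t ^ (-(α / ρ - b))) ^ (1 - u) := by
      rw [← Real.rpow_mul ht.le, ← Real.rpow_mul ht.le, ← Real.rpow_add ht]
      congr 1
      have : α = α / ρ * (1 - u + v) := by rw [← hρ]; field_simp
      linear_combination (-1) * this - hab
    have c2 : z ^ (-β) = (z ^ (-(β / ρ + a))) ^ v * (z ^ (-(β / ρ + b))) ^ (1 - u) := by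
      rw [← Real.rpow_mul hz.le, ← Real.rpow_mul hz.le, ← Real.rpow_add hz]
      congr 1
      have : β = β / ρ * (1 - u + v) := by rw [← hρ]; field_simp
      linear_combination (-1) * this + hab
    have c3 : d ^ (-lam) = (d ^ (-(lam / ρ))) ^ v * (d ^ (-(lam / ρ))) ^ (1 - u) := by
      rw [← Real.rpow_mul hd.le, ← Real.rpow_mul hd.le, ← Real.rpow_add hd]
      congr 1
      have : lam = lam / ρ * (1 - u + v) := by rw [← hρ]; field_simp
      linear_combination (-1) * this
    have c4 : F ^ u = F ^ v * F ^ (u - v) := by rw [← Real.rpow_add hF']; congr 1; ring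
    have c5 : G ^ (1 - v) = G ^ (1 - u) * G ^ (u - v) := by
      rw [← Real.rpow_add hG']; congr 1; ring
    rw [Real.mul_rpow hF p1.le, Real.mul_rpow hG p2.le, Real.mul_rpow hF hG, hW1, hW2,
      Real.mul_rpow (by positivity) (by positivity), Real.mul_rpow (by positivity) (by positivity),
      Real.mul_rpow (by positivity) (by positivity), Real.mul_rpow (by positivity) (by positivity),
      c1, c2, c3, c4, c5]
    ring
  rw [e]
  nlinarith

/-- bilinear bound for a kernel on the upper half space -/
def SwBil (n : ℕ) (u v : ℝ) (k : EuclideanSpace ℝ (Fin n) × ℝ → EuclideanSpace ℝ (Fin n) × ℝ → ℝ) :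
    Prop :=
  ∃ C : ℝ≥0∞, C ≠ ∞ ∧ ∀ F G : EuclideanSpace ℝ (Fin n) × ℝ → ℝ, Measurable F → Measurable G →
      (∀ x, 0 ≤ F x) → (∀ x, 0 ≤ G x) →
      ∫⁻ x in upperHalf n, ENNReal.ofReal (F x) ≤ 1 →
      ∫⁻ x in upperHalf n, ENNReal.ofReal (G x) ≤ 1 →
      ∫⁻ y in upperHalf n, ∫⁻ x in upperHalf n, ENNReal.ofReal (F x ^ u * G y ^ (1 - v) * k x y)
        ≤ C

theorem sw_bil_pos (n : ℕ) (hn : 1 ≤ n) (u v α β lam : ℝ) (hlam : 0 < lam)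
    (hu : u < 1) (hv0 : 0 < v) (hvu : v ≤ u) (hα : α < 1 - u) (hβ : β < v) (hαβ : 0 < α + β)
    (hbal : α + β + lam = (n + 1) * (1 - u + v)) : SwBil n u v (swW n α β lam) := by
  set ρ := 1 - u + v with hρ
  have hρ0 : 0 < ρ := by linarith
  have hu1 : 0 < 1 - u := by linarith
  obtain ⟨c, hc1, hc2⟩ : ∃ c, max (α / ρ * v) (β / ρ * (1 - u)) < c ∧
      c < min ((1 - β / ρ) * v) ((1 - α / ρ) * (1 - u)) := by
    refine exists_between ?_
    have t1 : α / ρ + β / ρ < 1 := by rw [← add_div, div_lt_one hρ0]; linarith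
    have t2 : α / ρ * ρ < 1 - u := by rw [div_mul_cancel₀ _ hρ0.ne']; exact hα
    have t3 : β / ρ * ρ < v := by rw [div_mul_cancel₀ _ hρ0.ne']; exact hβ
    rw [hρ] at t2 t3
    rw [max_lt_iff, lt_min_iff, lt_min_iff]
    refine ⟨⟨?_, ?_⟩, ?_, ?_⟩
    · exact mul_lt_mul_of_pos_right (by linarith) hv0
    · linarith
    · linarith
    · exact mul_lt_mul_of_pos_right (by linarith) hu1
  rw [max_lt_iff] at hc1
  rw [lt_min_iff] at hc2
  set a := c / v with ha
  set b := -(c / (1 - u)) with hb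
  have a1 : α / ρ < a := by rw [ha, lt_div_iff₀ hv0]; exact hc1.1
  have a2 : a < 1 - β / ρ := by rw [ha, div_lt_iff₀ hv0]; exact hc2.1
  have b1 : β / ρ < -b := by rw [hb, neg_neg, lt_div_iff₀ hu1]; exact hc1.2
  have b2 : -b < 1 - α / ρ := by rw [hb, neg_neg, div_lt_iff₀ hu1]; exact hc2.2
  have hab : a * v + b * (1 - u) = 0 := by rw [ha, hb]; field_simp; ring
  have hs : α / ρ + β / ρ + lam / ρ = n + 1 := by
    rw [← add_div, ← add_div, hbal]; field_simp
  have hs1 : 0 < α / ρ + β / ρ := by rw [← add_div]; positivity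
  have hs2 : α / ρ + β / ρ < 1 := by rw [← add_div, div_lt_one hρ0]; linarith
  obtain ⟨C₁, h₁, H₁⟩ := sw_J n hn (α / ρ - a) (β / ρ + a) (lam / ρ) (by linarith) (by linarith)
    (by linarith) (by linarith) (by linarith)
  obtain ⟨C₂, h₂, H₂⟩ := sw_J n hn (β / ρ + b) (α / ρ - b) (lam / ρ) (by linarith) (by linarith)
    (by linarith) (by linarith) (by linarith)
  refine ⟨C₁ + (C₂ + 1), by finiteness, fun F G hF hG hF0 hG0 hF1 hG1 => ?_⟩
  have c0 := sw_intFG (volume.restrict (upperHalf n)) F G hF0 hF1 hG0 hG1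
  have c1 := sw_intX (volume.restrict (upperHalf n)) _ (swW_meas n (α / ρ - a) (β / ρ + a) (lam / ρ))
    F hF hF0 hF1 C₁ (by
      filter_upwards [ae_restrict_mem (upperHalf_meas n)] with X hX _
      exact H₁ X hX) h₁
  have c2 := sw_intY (volume.restrict (upperHalf n)) (swW n (α / ρ - b) (β / ρ + b) (lam / ρ))
    G hG0 hG1 C₂ (by
      filter_upwards [ae_restrict_mem (upperHalf_meas n)] with X hX _
      simp_rw [swW_swap n (α / ρ - b) (β / ρ + b)]
      exact H₂ X hX) h₂
  refine le_trans ?_ (add_le_add c1 (add_le_add c2 c0))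
  have M1 : Measurable fun z : (EuclideanSpace ℝ (Fin n) × ℝ) × (EuclideanSpace ℝ (Fin n) × ℝ) =>
      ENNReal.ofReal (F z.2 * swW n (α / ρ - a) (β / ρ + a) (lam / ρ) z.2 z.1) := by
    have := (swW_meas n (α / ρ - a) (β / ρ + a) (lam / ρ)).comp measurable_swap
    simp only [Function.comp_def, Function.uncurry, Prod.fst_swap, Prod.snd_swap] at this
    fun_prop
  have M2 : Measurable fun z : (EuclideanSpace ℝ (Fin n) × ℝ) × (EuclideanSpace ℝ (Fin n) × ℝ) =>
      ENNReal.ofReal (G z.1 * swW n (α / ρ - b) (β / ρ + b) (lam / ρ) z.2 z.1) := by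
    have := (swW_meas n (α / ρ - b) (β / ρ + b) (lam / ρ)).comp measurable_swap
    simp only [Function.comp_def, Function.uncurry, Prod.fst_swap, Prod.snd_swap] at this
    fun_prop
  rw [← lintegral_add_left M2.lintegral_prod_right', ← lintegral_add_left M1.lintegral_prod_right']
  refine setLIntegral_mono' (upperHalf_meas n) fun Y hY => ?_
  dsimp only
  rw [← lintegral_add_left (sw_slice M2 Y),
    ← lintegral_add_left (sw_slice M1 Y)]
  refine setLIntegral_mono' (upperHalf_meas n) fun X hX => ?_
  dsimp only
  have hX : 0 < X.2 := hX
  have hY : 0 < Y.2 := hY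
  have f0 := hF0 X
  have g0 := hG0 Y
  have n1 : ∀ A B s, 0 ≤ swW n A B s X Y := fun A B s => by
    have := hsDist_nonneg' X Y
    unfold swW; positivity
  have n2 := n1 (α / ρ - b) (β / ρ + b) (lam / ρ)
  have n3 := n1 (α / ρ - a) (β / ρ + a) (lam / ρ)
  rw [← ENNReal.ofReal_add (by positivity) (by positivity),
    ← ENNReal.ofReal_add (by positivity) (by positivity)]
  refine ENNReal.ofReal_le_ofReal ?_
  rcases (hsDist_nonneg' X Y).eq_or_lt with hd | hd
  · have : swW n α β lam X Y = 0 := by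
      unfold swW; rw [← hd, Real.zero_rpow (by linarith)]; simp
    rw [this]; simp; positivity
  · exact sw_hoelder_pt u v ρ α β lam a b (F X) (G Y) X.2 Y.2 (hsDist X Y) hu hv0 hvu hρ hab
      f0 g0 hX hY hd

theorem sw_ker_split (n : ℕ) (α β lam ε : ℝ) (hlam : 0 < lam) (hε : 0 < ε) (hαβ : α + β = 0)
    (X Y : EuclideanSpace ℝ (Fin n) × ℝ) (hX : 0 < X.2) (hY : 0 < Y.2) :
    swW n α β lam X Y ≤ 2 ^ |α| * ‖X - Y‖ ^ (-lam) + 2 ^ ε * swW n α (β + ε) (lam - ε) X Y := by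
  have hN : ‖X - Y‖ = max ‖X.1 - Y.1‖ |X.2 - Y.2| := by
    rw [Prod.norm_def]; rfl
  have hd0 := hsDist_nonneg' X Y
  have hle := norm_le_hsDist X Y
  rw [← hN] at hle
  have hle2 : |X.2 - Y.2| ≤ ‖X - Y‖ := by rw [hN]; exact le_max_right _ _
  have n0 : 0 ≤ swW n α (β + ε) (lam - ε) X Y := by unfold swW; positivity
  rcases hd0.eq_or_lt with hd | hd
  · have : swW n α β lam X Y = 0 := by
      unfold swW; rw [← hd, Real.zero_rpow (by linarith)]; simp
    rw [this]; positivity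
  have hnorm : 0 < ‖X - Y‖ := by
    refine lt_of_le_of_ne (norm_nonneg _) fun h => ?_
    have : X = Y := sub_eq_zero.1 (norm_eq_zero.1 h.symm)
    rw [this] at hd
    simp [hsDist] at hd
  have hβ : -β = α := by linarith
  rcases lt_or_ge (hsDist X Y) (Y.2 / 2) with h | h
  · refine le_trans ?_ (le_add_of_nonneg_right (by positivity))
    unfold swW
    have h3 : |X.2 - Y.2| < Y.2 / 2 := by linarith
    rw [abs_lt] at h3
    have h4 : X.2 ^ (-α) * Y.2 ^ (-β) ≤ 2 ^ |α| := by
      have : X.2 ^ (-α) * Y.2 ^ (-β) = (X.2 / Y.2) ^ (-α) := by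
        rw [Real.div_rpow hX.le hY.le, hβ, Real.rpow_neg hY.le α]; field_simp
      rw [this]
      rcases le_total 0 α with h0 | h0
      · rw [abs_of_nonneg h0, show (2:ℝ)^α = (1/2)^(-α) by
          rw [one_div, Real.inv_rpow (by norm_num), Real.rpow_neg (by norm_num), inv_inv]]
        refine Real.rpow_le_rpow_of_nonpos (by positivity) ?_ (by linarith)
        rw [le_div_iff₀ hY]; linarith
      · rw [abs_of_nonpos h0]
        refine Real.rpow_le_rpow (by positivity) ?_ (by linarith)
        rw [div_le_iff₀ hY]; linarith
    have h5 : hsDist X Y ^ (-lam) ≤ ‖X - Y‖ ^ (-lam) :=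
      Real.rpow_le_rpow_of_nonpos hnorm hle (by linarith)
    exact mul_le_mul h4 h5 (by positivity) (by positivity)
  · refine le_trans ?_ (le_add_of_nonneg_left (by positivity))
    unfold swW
    have e1 : Y.2 ^ (-β) = Y.2 ^ (-(β + ε)) * Y.2 ^ ε := by
      rw [← Real.rpow_add hY]; congr 1; ring
    have e2 : hsDist X Y ^ (-(lam - ε)) = hsDist X Y ^ (-lam) * hsDist X Y ^ ε := by
      rw [← Real.rpow_add hd]; congr 1; ring
    have e3 : Y.2 ^ ε ≤ 2 ^ ε * hsDist X Y ^ ε := by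
      rw [← Real.mul_rpow (by norm_num) hd.le]
      exact Real.rpow_le_rpow hY.le (by linarith) hε.le
    rw [e1, e2]
    calc _ = X.2 ^ (-α) * Y.2 ^ (-(β + ε)) * hsDist X Y ^ (-lam) * Y.2 ^ ε := by ring
      _ ≤ X.2 ^ (-α) * Y.2 ^ (-(β + ε)) * hsDist X Y ^ (-lam) * (2 ^ ε * hsDist X Y ^ ε) := by
          gcongr
      _ = _ := by ring

theorem sw_bil_zero (n : ℕ) (hn : 1 ≤ n) (u v α β lam : ℝ) (hlam : 0 < lam) (hlam1 : lam < n + 1)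
    (hu : u < 1) (hv0 : 0 < v) (hvu : v ≤ u) (hα : α < 1 - u) (hβ : β < v) (hαβ : α + β = 0)
    (hbal : α + β + lam = (n + 1) * (1 - u + v)) : SwBil n u v (swW n α β lam) := by
  have hn0 : (0:ℝ) ≤ n := Nat.cast_nonneg n
  have hvu' : v < u := by
    refine lt_of_le_of_ne hvu fun h => ?_
    rw [h] at hbal; linarith
  obtain ⟨ε, hε, hε2⟩ : ∃ ε, 0 < ε ∧ ε < min (v - β) lam := exists_between
    (lt_min (by linarith) hlam)
  rw [lt_min_iff] at hε2
  obtain ⟨C₁, h₁, H₁⟩ := sw_bil_pos n hn u v α (β + ε) (lam - ε) (by linarith) hu hv0 hvu hα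
    (by linarith) (by linarith) (by linarith)
  have : (volume : Measure (EuclideanSpace ℝ (Fin n) × ℝ)).IsAddHaarMeasure := by
    rw [Measure.volume_eq_prod]; infer_instance
  obtain ⟨C₂, h₂, H₂⟩ := sw_hls (volume : Measure (EuclideanSpace ℝ (Fin n) × ℝ)) (upperHalf n)
    u v hu hv0 hvu'
  have hfr : ((Module.finrank ℝ (EuclideanSpace ℝ (Fin n) × ℝ) : ℕ) : ℝ) * (1 - u + v) = lam := by
    rw [Module.finrank_prod, finrank_euclideanSpace, Fintype.card_fin, Module.finrank_self]
    push_cast; linarith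
  rw [hfr] at H₂
  refine ⟨ENNReal.ofReal (2 ^ |α|) * C₂ + ENNReal.ofReal (2 ^ ε) * C₁, by finiteness,
    fun F G hF hG hF0 hG0 hF1 hG1 => ?_⟩
  have b1 := mul_le_mul_right (H₁ F G hF hG hF0 hG0 hF1 hG1) (ENNReal.ofReal (2 ^ ε))
  have b2 := mul_le_mul_right (H₂ F G hF hG hF0 hG0 hF1 hG1) (ENNReal.ofReal (2 ^ |α|))
  refine le_trans ?_ (add_le_add b2 b1)
  have M : Measurable fun z : (EuclideanSpace ℝ (Fin n) × ℝ) × (EuclideanSpace ℝ (Fin n) × ℝ) =>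
      ENNReal.ofReal (2 ^ |α|) *
      ENNReal.ofReal (F z.2 ^ u * G z.1 ^ (1 - v) * ‖z.2 - z.1‖ ^ (-lam)) := by
    fun_prop
  rw [← lintegral_const_mul' _ _ ENNReal.ofReal_ne_top,
    ← lintegral_const_mul' _ _ ENNReal.ofReal_ne_top]
  simp_rw [← lintegral_const_mul' _ _ (ENNReal.ofReal_ne_top (r := (2:ℝ) ^ |α|)),
    ← lintegral_const_mul' _ _ (ENNReal.ofReal_ne_top (r := (2:ℝ) ^ ε))]
  rw [← lintegral_add_left M.lintegral_prod_right']
  refine setLIntegral_mono' (upperHalf_meas n) fun Y hY => ?_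
  dsimp only
  rw [← lintegral_add_left (sw_slice M Y)]
  refine setLIntegral_mono' (upperHalf_meas n) fun X hX => ?_
  dsimp only
  have hX : 0 < X.2 := hX
  have hY : 0 < Y.2 := hY
  have f0 := hF0 X
  have g0 := hG0 Y
  have n1 : 0 ≤ swW n α (β + ε) (lam - ε) X Y := by
    have := hsDist_nonneg' X Y
    unfold swW; positivity
  rw [← ENNReal.ofReal_mul (by positivity), ← ENNReal.ofReal_mul (by positivity),
    ← ENNReal.ofReal_add (by positivity) (by positivity)]
  refine ENNReal.ofReal_le_ofReal ?_
  have := mul_le_mul_of_nonneg_left (sw_ker_split n α β lam ε hlam hε hαβ X Y hX hY)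
    (by positivity : 0 ≤ F X ^ u * G Y ^ (1 - v))
  linarith

theorem steinWeiss_upper_half_space_dual
    (n : ℕ) (hn : 1 ≤ n) (lam p q α β : ℝ)
    (hlam0 : 0 < lam) (hlam1 : lam < (n : ℝ) + 1)
    (hp1 : 1 < p) (hpq : p ≤ q)
    (hα : α < 1 - 1 / p) (hβ : β < 1 / q) (hαβ : 0 ≤ α + β)
    (hbal : 1 / q = 1 / p - ((n : ℝ) + 1 - (α + β + lam)) / ((n : ℝ) + 1)) :
    ∃ C : ℝ, 0 < C ∧
      ∀ f : EuclideanSpace ℝ (Fin n) × ℝ → ℝ,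
        Measurable f → (∀ X, 0 ≤ f X) →
        (∫⁻ Y in upperHalf n,
            ENNReal.ofReal (Y.2 ^ (-(β * q))) * Elam n lam f Y ^ q) ^ (1 / q)
          ≤ ENNReal.ofReal C *
            (∫⁻ X in upperHalf n,
              ENNReal.ofReal (X.2 ^ (α * p)) * ENNReal.ofReal (f X) ^ p) ^ (1 / p) := by
  have hp0 : 0 < p := by linarith
  have hq0 : 0 < q := by linarith
  have hn0 : (0:ℝ) < (n:ℝ) + 1 := by positivity
  have hu : 1 / p < 1 := by rw [div_lt_one hp0]; exact hp1
  have hv0 : 0 < 1 / q := by positivity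
  have hvu : 1 / q ≤ 1 / p := one_div_le_one_div_of_le hp0 hpq
  have hbal' : α + β + lam = (n + 1) * (1 - 1 / p + 1 / q) := by
    rw [hbal]; field_simp; ring
  have hB : SwBil n (1 / p) (1 / q) (swW n α β lam) := by
    rcases hαβ.eq_or_lt with h | h
    · exact sw_bil_zero n hn _ _ α β lam hlam0 hlam1 hu hv0 hvu hα hβ h.symm hbal'
    · exact sw_bil_pos n hn _ _ α β lam hlam0 hu hv0 hvu hα hβ h hbal'
  obtain ⟨C, hC, H⟩ := hB
  have hC1 : C + 1 ≠ ∞ := by finiteness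
  have hC0 : C + 1 ≠ 0 := by simp
  refine ⟨(C + 1).toReal, ENNReal.toReal_pos hC0 hC1, fun f hf hf0 => ?_⟩
  rw [ENNReal.ofReal_toReal hC1]
  have main := sw_duality ((volume : Measure (EuclideanSpace ℝ (Fin n) × ℝ)).restrict (upperHalf n))
    p q hp1 (by linarith) (swW n α β lam) (C + 1) hC0
    (fun F G hF hG hF0 hG0 hF1 hG1 => (H F G hF hG hF0 hG0 hF1 hG1).trans le_self_add)
    (fun X => |X.2| ^ α * f X) (by fun_prop) (fun X => mul_nonneg (by positivity) (hf0 X))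
  refine le_of_eq_of_le ?_ (main.trans_eq ?_)
  · congr 1
    refine setLIntegral_congr_fun (upperHalf_meas n) fun Y hY => ?_
    have hY : 0 < Y.2 := hY
    rw [← neg_mul, Real.rpow_mul hY.le, ← ENNReal.ofReal_rpow_of_nonneg (by positivity) hq0.le,
      ← ENNReal.mul_rpow_of_nonneg _ _ hq0.le, Elam,
      ← lintegral_const_mul' _ _ ENNReal.ofReal_ne_top]
    congr 1
    have : (volume : Measure (EuclideanSpace ℝ (Fin n) × ℝ)).IsAddHaarMeasure := by
      rw [Measure.volume_eq_prod]; infer_instance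
    have hne : ∀ᵐ X ∂(volume : Measure (EuclideanSpace ℝ (Fin n) × ℝ)).restrict (upperHalf n),
      X ≠ Y := ae_restrict_of_ae (Measure.ae_ne volume Y)
    refine lintegral_congr_ae ?_
    filter_upwards [hne, ae_restrict_mem (upperHalf_meas n)] with X hXY hX
    have hX : 0 < X.2 := hX
    have hd : 0 < hsDist X Y := by
      refine lt_of_lt_of_le ?_ (norm_le_hsDist X Y)
      have : 0 < ‖X - Y‖ := norm_pos_iff.2 (sub_ne_zero.2 hXY)
      rwa [Prod.norm_def] at this
    rw [ENNReal.ofReal_rpow_of_pos hd, ← ENNReal.ofReal_mul (hf0 X),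
      ← ENNReal.ofReal_mul (by positivity)]
    congr 1
    unfold swW
    rw [abs_of_pos hX, Real.rpow_neg hX.le α]
    field_simp
  · congr 2
    refine setLIntegral_congr_fun (upperHalf_meas n) fun X hX => ?_
    have hX : 0 < X.2 := hX
    rw [abs_of_pos hX, ENNReal.ofReal_mul (by positivity), ENNReal.mul_rpow_of_nonneg _ _ hp0.le,
      ENNReal.ofReal_rpow_of_nonneg (by positivity) hp0.le, ← Real.rpow_mul hX.le]
end
end

section
/- Let n ≥ 0 and m ≥ 1 be integers, 0 < λ < n+m, 1 < p ≤ q < ∞, and let α, β ∈ ℝ satisfy α < m/p', β < m/q, α + β ≥ 0 and 1/q = 1/p − (n+m−(α+β+λ))/(n+m). Then there exists a constant C > 0 such that for every nonnegative measurable function f on ℝ^{n+m}, (∫_{ℝ^{n+m}} |ŷ|^{−βq} (I_λ f(y,ŷ))^q dy dŷ)^{1/q} ≤ C · (∫_{ℝ^{n+m}} |x̂|^{αp} f(x,x̂)^p dx dx̂)^{1/p}, with both sides interpreted in [0,∞]. -/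
open MeasureTheory ENNReal

noncomputable section

/-- The Euclidean distance `|(x,x̂)-(y,ŷ)|` on `ℝ^n × ℝ^m`. -/
def pDist {n m : ℕ} (X Y : EuclideanSpace ℝ (Fin n) × EuclideanSpace ℝ (Fin m)) : ℝ :=
  Real.sqrt (‖X.1 - Y.1‖ ^ 2 + ‖X.2 - Y.2‖ ^ 2)

/-- The Riesz potential `I_λ f (Y) = ∫_{ℝ^{n+m}} f(X) |X-Y|^{-λ} dX`, interpreted in
`[0,∞]`. -/
def Ilam (n m : ℕ) (lam : ℝ)
    (f : EuclideanSpace ℝ (Fin n) × EuclideanSpace ℝ (Fin m) → ℝ)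
    (Y : EuclideanSpace ℝ (Fin n) × EuclideanSpace ℝ (Fin m)) : ℝ≥0∞ :=
  ∫⁻ X, ENNReal.ofReal (f X) * ENNReal.ofReal (pDist X Y) ^ (-lam)

lemma sw_rad_scale {E : Type*} [NormedAddCommGroup E] [NormedSpace ℝ E] [MeasurableSpace E]
    [BorelSpace E] [FiniteDimensional ℝ E] (μ : Measure E) [μ.IsAddHaarMeasure] (A τ : ℝ)
    (hfin : ∫⁻ y, ENNReal.ofReal (‖y‖ ^ A * max ‖y‖ 1 ^ (-τ)) ∂μ < ⊤) :
    ∃ C : ℝ, 0 < C ∧ ∀ ρ : ℝ, 0 < ρ →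
      ∫⁻ y, ENNReal.ofReal (‖y‖ ^ A * max ‖y‖ ρ ^ (-τ)) ∂μ
        ≤ ENNReal.ofReal (C * ρ ^ (A + Module.finrank ℝ E - τ)) := by
  set J := ∫⁻ y, ENNReal.ofReal (‖y‖ ^ A * max ‖y‖ 1 ^ (-τ)) ∂μ with hJ
  refine ⟨J.toReal + 1, by positivity, fun ρ hρ => ?_⟩
  have hmeas : Measurable (fun y : E => ENNReal.ofReal (‖y‖ ^ A * max ‖y‖ ρ ^ (-τ))) := by
    fun_prop
  have h1 := Measure.map_addHaar_smul μ hρ.ne'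
  have h2 : ∫⁻ y, ENNReal.ofReal (‖ρ • y‖ ^ A * max ‖ρ • y‖ ρ ^ (-τ)) ∂μ
      = ENNReal.ofReal |(ρ ^ Module.finrank ℝ E)⁻¹| *
        ∫⁻ y, ENNReal.ofReal (‖y‖ ^ A * max ‖y‖ ρ ^ (-τ)) ∂μ := by
    rw [← lintegral_map hmeas (measurable_const_smul ρ), h1, lintegral_smul_measure, smul_eq_mul]
  have h3 : ∀ y : E, ENNReal.ofReal (‖ρ • y‖ ^ A * max ‖ρ • y‖ ρ ^ (-τ))
      = ENNReal.ofReal (ρ ^ (A - τ)) * ENNReal.ofReal (‖y‖ ^ A * max ‖y‖ 1 ^ (-τ)) := by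
    intro y
    rw [← ENNReal.ofReal_mul (by positivity)]
    congr 1
    have e : max ‖ρ • y‖ ρ = ρ * max ‖y‖ 1 := by
      rw [norm_smul, Real.norm_of_nonneg hρ.le, mul_max_of_nonneg _ _ hρ.le, mul_one]
    rw [e, norm_smul, Real.norm_of_nonneg hρ.le, Real.mul_rpow hρ.le (norm_nonneg _),
      Real.mul_rpow hρ.le (by positivity), sub_eq_add_neg, Real.rpow_add hρ]
    ring
  simp_rw [h3] at h2
  rw [lintegral_const_mul' _ _ ENNReal.ofReal_ne_top, ← hJ] at h2
  have hd : 0 < ρ ^ Module.finrank ℝ E := by positivity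
  have h4 : ∫⁻ y, ENNReal.ofReal (‖y‖ ^ A * max ‖y‖ ρ ^ (-τ)) ∂μ
      = ENNReal.ofReal (ρ ^ Module.finrank ℝ E) * (ENNReal.ofReal (ρ ^ (A - τ)) * J) := by
    rw [h2, ← mul_assoc, ← ENNReal.ofReal_mul hd.le, abs_of_pos (by positivity),
      mul_inv_cancel₀ hd.ne', ENNReal.ofReal_one, one_mul]
  rw [h4, ← ENNReal.ofReal_toReal hfin.ne, ← ENNReal.ofReal_mul (by positivity),
    ← ENNReal.ofReal_mul (by positivity)]
  apply ENNReal.ofReal_le_ofReal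
  have : ρ ^ (A + Module.finrank ℝ E - τ) = ρ ^ Module.finrank ℝ E * ρ ^ (A - τ) := by
    rw [← Real.rpow_natCast, ← Real.rpow_add hρ]; congr 1; ring
  rw [this, ENNReal.toReal_ofReal ENNReal.toReal_nonneg]
  have : 0 < ρ ^ Module.finrank ℝ E * ρ ^ (A - τ) := by positivity
  nlinarith

lemma sw_rad_fin {E : Type*} [NormedAddCommGroup E] [NormedSpace ℝ E] [MeasurableSpace E]
    [BorelSpace E] [FiniteDimensional ℝ E] [Nontrivial E] (μ : Measure E) [μ.IsAddHaarMeasure]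
    (A τ : ℝ) (hA : 0 < A + Module.finrank ℝ E) (hτ : A + Module.finrank ℝ E < τ) :
    ∫⁻ y, ENNReal.ofReal (‖y‖ ^ A * max ‖y‖ 1 ^ (-τ)) ∂μ < ⊤ := by
  have hd : 1 ≤ Module.finrank ℝ E := Module.finrank_pos
  have hi : Integrable (fun y : E => ‖y‖ ^ A * max ‖y‖ 1 ^ (-τ)) μ := by
    rw [integrable_fun_norm_addHaar μ (f := fun t : ℝ => t ^ A * max t 1 ^ (-τ))]
    rw [← Set.Ioc_union_Ioi_eq_Ioi (zero_le_one : (0:ℝ) ≤ 1)]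
    have e : ∀ y : ℝ, 0 < y → y ^ (Module.finrank ℝ E - 1) * y ^ A
        = y ^ (A + Module.finrank ℝ E - 1) := by
      intro y hy
      rw [← Real.rpow_natCast, ← Real.rpow_add hy]; congr 1; push_cast [hd]; ring
    refine IntegrableOn.union ?_ ?_
    · have h := intervalIntegral.intervalIntegrable_rpow' (a := 0) (b := 1)
        (r := A + Module.finrank ℝ E - 1) (by linarith)
      rw [intervalIntegrable_iff_integrableOn_Ioc_of_le zero_le_one] at h
      refine h.congr_fun (fun y hy => ?_) measurableSet_Ioc
      simp only [smul_eq_mul]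
      rw [max_eq_right hy.2, Real.one_rpow, mul_one, e y hy.1]
    · have h := integrableOn_Ioi_rpow_of_lt (a := A + Module.finrank ℝ E - 1 - τ) (by linarith)
        (zero_lt_one)
      refine h.congr_fun (fun y hy => ?_) measurableSet_Ioi
      have hy0 : 0 < y := lt_trans zero_lt_one hy
      simp only [smul_eq_mul]
      rw [max_eq_left (le_of_lt hy), ← mul_assoc, e y hy0, ← Real.rpow_add hy0]; congr 1
  exact hi.lintegral_lt_top

lemma sw_rad_fin0 {E : Type*} [NormedAddCommGroup E] [NormedSpace ℝ E] [MeasurableSpace E]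
    [BorelSpace E] [FiniteDimensional ℝ E] (μ : Measure E) [μ.IsAddHaarMeasure]
    (τ : ℝ) (hτ : (Module.finrank ℝ E : ℝ) < τ) :
    ∫⁻ y, ENNReal.ofReal (‖y‖ ^ (0:ℝ) * max ‖y‖ 1 ^ (-τ)) ∂μ < ⊤ := by
  rcases subsingleton_or_nontrivial E with h | h
  · have : ∀ y : E, ENNReal.ofReal (‖y‖ ^ (0:ℝ) * max ‖y‖ 1 ^ (-τ)) = 1 := by
      intro y; rw [Subsingleton.elim y 0]; simp
    simp_rw [this]
    rw [lintegral_const, one_mul]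
    exact (Set.subsingleton_univ.finite.isCompact).measure_lt_top
  · have : 0 < Module.finrank ℝ E := Module.finrank_pos
    exact sw_rad_fin μ 0 τ (by rw [zero_add]; exact_mod_cast this) (by linarith)

/-- the radial bound -/
lemma sw_rad {E : Type*} [NormedAddCommGroup E] [NormedSpace ℝ E] [MeasurableSpace E]
    [BorelSpace E] [FiniteDimensional ℝ E] [Nontrivial E] (μ : Measure E) [μ.IsAddHaarMeasure]
    (A τ : ℝ) (hA : 0 < A + Module.finrank ℝ E) (hτ : A + Module.finrank ℝ E < τ) :
    ∃ C : ℝ, 0 < C ∧ ∀ ρ : ℝ, 0 < ρ →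
      ∫⁻ y, ENNReal.ofReal (‖y‖ ^ A * max ‖y‖ ρ ^ (-τ)) ∂μ
        ≤ ENNReal.ofReal (C * ρ ^ (A + Module.finrank ℝ E - τ)) :=
  sw_rad_scale μ A τ (sw_rad_fin μ A τ hA hτ)


lemma sw_dual_aux {Ω : Type*} [MeasurableSpace Ω] (μ : Measure Ω)
    {q s : ℝ} (hqs : q.HolderConjugate s) (g g' : Ω → ℝ≥0∞) (hg' : Measurable g')
    (hle : ∀ x, g' x ≤ g x) (hfin : ∀ x, g' x ≠ ⊤) (hM : ∫⁻ x, g' x ^ q ∂μ ≠ ⊤) (c : ℝ≥0∞)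
    (h : ∀ H : Ω → ℝ, Measurable H → (∀ x, 0 ≤ H x) → ∫⁻ x, ENNReal.ofReal (H x ^ s) ∂μ ≤ 1 →
      ∫⁻ x, g x * ENNReal.ofReal (H x) ∂μ ≤ c) :
    ∫⁻ x, g' x ^ q ∂μ ≤ c ^ q := by
  have hq := hqs.pos
  have hs := hqs.symm.pos
  have hq1 := hqs.lt
  set M := ∫⁻ x, g' x ^ q ∂μ with hMdef
  rcases eq_or_ne M 0 with h0 | h0
  · rw [h0]; exact zero_le
  have hMs0 : M ^ (1 / s) ≠ 0 := by
    simp [ENNReal.rpow_eq_zero_iff, h0, hM]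
  have hMst : M ^ (1 / s) ≠ ⊤ := ENNReal.rpow_ne_top_of_nonneg (by positivity) hM
  set k : Ω → ℝ≥0∞ := fun x => g' x ^ (q - 1) * (M ^ (1 / s))⁻¹ with hk
  have hkfin : ∀ x, k x ≠ ⊤ := fun x =>
    ENNReal.mul_ne_top (ENNReal.rpow_ne_top_of_nonneg (by linarith) (hfin x))
      (ENNReal.inv_ne_top.2 hMs0)
  have hkm : Measurable k := by fun_prop
  have e1 : ∀ x, ENNReal.ofReal ((k x).toReal) = k x := fun x => ENNReal.ofReal_toReal (hkfin x)
  have e2 : ∀ x, ENNReal.ofReal ((k x).toReal ^ s) = g' x ^ q * M⁻¹ := by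
    intro x
    rw [← ENNReal.ofReal_rpow_of_nonneg ENNReal.toReal_nonneg hs.le, e1, hk]
    simp only
    rw [ENNReal.mul_rpow_of_nonneg _ _ hs.le, ← ENNReal.rpow_mul, ENNReal.inv_rpow,
      ← ENNReal.rpow_mul, one_div_mul_cancel hs.ne', ENNReal.rpow_one, hqs.sub_one_mul_conj]
  have h1 := h (fun x => (k x).toReal) hkm.ennreal_toReal (fun x => ENNReal.toReal_nonneg) (by
    simp_rw [e2]
    rw [lintegral_mul_const _ (by fun_prop), ← hMdef, ENNReal.mul_inv_cancel h0 hM])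
  simp_rw [e1] at h1
  have h2 : M * (M ^ (1 / s))⁻¹ ≤ c := by
    refine le_trans ?_ h1
    rw [hMdef, ← lintegral_mul_const _ (by fun_prop), ← hMdef]
    refine lintegral_mono fun x => ?_
    calc g' x ^ q * (M ^ (1 / s))⁻¹ = g' x * (g' x ^ (q - 1) * (M ^ (1 / s))⁻¹) := by
          rw [← mul_assoc]; congr 1
          conv_rhs => rw [← ENNReal.rpow_one (g' x), ← ENNReal.rpow_mul, one_mul]
          rw [← ENNReal.rpow_add_of_nonneg _ _ zero_le_one (by linarith)]; congr 1; ring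
      _ ≤ g x * k x := mul_le_mul_left (hle x) _
  have h3 : M * (M ^ (1 / s))⁻¹ = M ^ (1 / q) := by
    rw [← ENNReal.rpow_neg]
    nth_rewrite 1 [← ENNReal.rpow_one M]
    rw [← ENNReal.rpow_add _ _ h0 hM]; congr 1
    have := hqs.inv_add_inv_eq_one
    rw [one_div, one_div]; linarith
  rw [h3] at h2
  calc M = (M ^ (1 / q)) ^ q := by
        rw [← ENNReal.rpow_mul, one_div_mul_cancel hq.ne', ENNReal.rpow_one]
    _ ≤ c ^ q := ENNReal.rpow_le_rpow h2 hq.le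

lemma sw_dual {Ω : Type*} [MeasurableSpace Ω] (μ : Measure Ω) [SigmaFinite μ]
    {q s : ℝ} (hqs : q.HolderConjugate s) (g : Ω → ℝ≥0∞) (hg : Measurable g) (c : ℝ≥0∞)
    (h : ∀ H : Ω → ℝ, Measurable H → (∀ x, 0 ≤ H x) → ∫⁻ x, ENNReal.ofReal (H x ^ s) ∂μ ≤ 1 →
      ∫⁻ x, g x * ENNReal.ofReal (H x) ∂μ ≤ c) :
    ∫⁻ x, g x ^ q ∂μ ≤ c ^ q := by
  have hq := hqs.pos
  set G : ℕ → Ω → ℝ≥0∞ := fun k => (spanningSets μ k).indicator (fun x => min (g x) k) with hG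
  have hGm : ∀ k, Measurable (G k) := fun k =>
    (hg.min measurable_const).indicator (measurableSet_spanningSets μ k)
  have hGle : ∀ k x, G k x ≤ min (g x) k := fun k x => Set.indicator_le_self _ _ x
  have hmono : ∀ x, Monotone fun k => G k x := by
    intro x i j hij
    simp only [hG, Set.indicator]
    by_cases hx : x ∈ spanningSets μ i
    · rw [if_pos hx, if_pos (monotone_spanningSets μ hij hx)]
      exact min_le_min le_rfl (by exact_mod_cast hij)
    · rw [if_neg hx]; exact zero_le
  have hlim : ∀ x, Filter.Tendsto (fun k => G k x) Filter.atTop (nhds (g x)) := by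
    intro x
    have h1 : Filter.Tendsto (fun k : ℕ => min (g x) (k : ℝ≥0∞)) Filter.atTop
        (nhds (min (g x) ⊤)) := tendsto_const_nhds.min ENNReal.tendsto_nat_nhds_top
    rw [min_top_right] at h1
    refine h1.congr' ?_
    have := eventually_mem_spanningSets μ x
    filter_upwards [this] with k hk
    simp [hG, hk]
  have hT : Filter.Tendsto (fun k => ∫⁻ x, G k x ^ q ∂μ) Filter.atTop
      (nhds (∫⁻ x, g x ^ q ∂μ)) := by
    refine lintegral_tendsto_of_tendsto_of_monotone (fun k => ?_) ?_ ?_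
    · exact ((hGm k).pow_const q).aemeasurable
    · exact Filter.Eventually.of_forall fun x i j hij =>
        ENNReal.rpow_le_rpow (hmono x hij) hq.le
    · exact Filter.Eventually.of_forall fun x =>
        ((ENNReal.continuous_rpow_const (y := q)).tendsto (g x)).comp (hlim x)
  refine le_of_tendsto' hT fun k => ?_
  refine sw_dual_aux μ hqs g (G k) (hGm k) (fun x => (hGle k x).trans (min_le_left _ _))
    (fun x => ne_top_of_le_ne_top (ENNReal.natCast_ne_top k) ((hGle k x).trans (min_le_right _ _)))
    ?_ c h
  have : ∫⁻ x, G k x ^ q ∂μ ≤ ∫⁻ x, (spanningSets μ k).indicator (fun _ => (k : ℝ≥0∞) ^ q) x ∂μ := by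
    refine lintegral_mono fun x => ?_
    by_cases hx : x ∈ spanningSets μ k
    · simp only [hx, Set.indicator_of_mem]
      exact ENNReal.rpow_le_rpow ((hGle k x).trans (min_le_right _ _)) hq.le
    · simp [hG, hx, hq]
  refine ne_top_of_le_ne_top ?_ this
  rw [lintegral_indicator_const (measurableSet_spanningSets μ k)]
  exact ENNReal.mul_ne_top (ENNReal.rpow_ne_top_of_nonneg hq.le (ENNReal.natCast_ne_top k))
    (measure_spanningSets_lt_top μ k).ne

/-- Boundedness of the bilinear form with kernel `K` on the unit balls of `L^p`, `L^s`. -/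
def SWNB {Ω : Type*} [MeasurableSpace Ω] (μ : Measure Ω) (p s : ℝ) (K : Ω → Ω → ℝ) : Prop :=
  ∃ c : ℝ, 0 < c ∧ ∀ F H : Ω → ℝ, Measurable F → Measurable H → (∀ x, 0 ≤ F x) → (∀ x, 0 ≤ H x) →
    ∫⁻ x, ENNReal.ofReal (F x ^ p) ∂μ ≤ 1 → ∫⁻ x, ENNReal.ofReal (H x ^ s) ∂μ ≤ 1 →
    ∫⁻ x, ∫⁻ y, ENNReal.ofReal (F x * H y * K x y) ∂μ ∂μ ≤ ENNReal.ofReal c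

lemma SWNB.strong {Ω : Type*} [MeasurableSpace Ω] {μ : Measure Ω} [SigmaFinite μ]
    {p q s : ℝ} (hp : 0 < p) (hqs : q.HolderConjugate s) {K : Ω → Ω → ℝ}
    (hK : Measurable (Function.uncurry K)) (hNB : SWNB μ p s K) :
    ∃ C : ℝ, 0 < C ∧ ∀ F : Ω → ℝ, Measurable F → (∀ x, 0 ≤ F x) →
      (∫⁻ y, (∫⁻ x, ENNReal.ofReal (F x * K x y) ∂μ) ^ q ∂μ) ^ (1 / q)
        ≤ ENNReal.ofReal C * (∫⁻ x, ENNReal.ofReal (F x ^ p) ∂μ) ^ (1 / p) := by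
  obtain ⟨c, hc, hb⟩ := hNB
  have hq := hqs.pos
  have hK' : Measurable fun z : Ω × Ω => K z.1 z.2 := hK
  have key : ∀ F : Ω → ℝ, Measurable F → (∀ x, 0 ≤ F x) →
      ∫⁻ x, ENNReal.ofReal (F x ^ p) ∂μ ≤ 1 →
      ∫⁻ y, (∫⁻ x, ENNReal.ofReal (F x * K x y) ∂μ) ^ q ∂μ ≤ ENNReal.ofReal c ^ q := by
    intro F hF hF0 hF1
    have hm2 : Measurable fun z : Ω × Ω => ENNReal.ofReal (F z.2 * K z.2 z.1) := by
      have : Measurable fun z : Ω × Ω => K z.2 z.1 := hK'.comp measurable_swap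
      fun_prop
    refine sw_dual μ hqs _ hm2.lintegral_prod_right' _ ?_
    intro H hH hH0 hH1
    refine le_trans (le_of_eq ?_) (hb F H hF hH hF0 hH0 hF1 hH1)
    have hm3 : Measurable fun z : Ω × Ω => ENNReal.ofReal (F z.1 * H z.2 * K z.1 z.2) := by
      fun_prop
    rw [lintegral_lintegral_swap hm3.aemeasurable]
    refine lintegral_congr fun y => ?_
    rw [← lintegral_mul_const' _ _ ENNReal.ofReal_ne_top]
    refine lintegral_congr fun x => ?_
    rw [← ENNReal.ofReal_mul' (hH0 y)]
    congr 1; ring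
  refine ⟨c, hc, fun F hF hF0 => ?_⟩
  set I := ∫⁻ x, ENNReal.ofReal (F x ^ p) ∂μ with hI
  have hFpm : Measurable fun x => ENNReal.ofReal (F x ^ p) := by fun_prop
  rcases eq_or_ne I ⊤ with ht | ht
  · rw [ht, ENNReal.top_rpow_of_pos (by positivity), ENNReal.mul_top (by simpa using hc)]
    exact le_top
  rcases eq_or_ne I 0 with h0 | h0
  · have hz : ∀ᵐ x ∂μ, F x = 0 := by
      rw [hI, lintegral_eq_zero_iff hFpm] at h0
      filter_upwards [h0] with x hx
      by_contra hne
      have : 0 < F x := lt_of_le_of_ne (hF0 x) (Ne.symm hne)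
      simp only [Pi.zero_apply, ENNReal.ofReal_eq_zero] at hx
      exact absurd hx (not_le.2 (by positivity))
    have : ∀ y, ∫⁻ x, ENNReal.ofReal (F x * K x y) ∂μ = 0 := by
      intro y
      rw [← lintegral_zero (μ := μ)]
      refine lintegral_congr_ae ?_
      filter_upwards [hz] with x hx
      simp [hx]
    simp_rw [this]
    simp [hq]
  set r : ℝ := (I ^ (1 / p)).toReal with hr
  have hIp0 : I ^ (1 / p) ≠ 0 := by simp [ENNReal.rpow_eq_zero_iff, h0, ht]
  have hIpt : I ^ (1 / p) ≠ ⊤ := ENNReal.rpow_ne_top_of_nonneg (by positivity) ht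
  have hr0 : 0 < r := ENNReal.toReal_pos hIp0 hIpt
  have hrI : ENNReal.ofReal r = I ^ (1 / p) := ENNReal.ofReal_toReal hIpt
  have hrp : ENNReal.ofReal (r ^ p) = I := by
    rw [← ENNReal.ofReal_rpow_of_pos hr0, hrI, ← ENNReal.rpow_mul, one_div_mul_cancel hp.ne',
      ENNReal.rpow_one]
  have h1 := key (fun x => F x * r⁻¹) (by fun_prop) (fun x => mul_nonneg (hF0 x) (by positivity)) (by
    have : ∀ x, ENNReal.ofReal ((F x * r⁻¹) ^ p) = ENNReal.ofReal (F x ^ p) * I⁻¹ := by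
      intro x
      rw [Real.mul_rpow (hF0 x) (by positivity), ENNReal.ofReal_mul (Real.rpow_nonneg (hF0 x) _),
        Real.inv_rpow hr0.le, ENNReal.ofReal_inv_of_pos (by positivity), hrp]
    simp_rw [this]
    rw [lintegral_mul_const _ hFpm, ← hI, ENNReal.mul_inv_cancel h0 ht])
  have h2 : ∀ y, ∫⁻ x, ENNReal.ofReal (F x * K x y) ∂μ
      = ENNReal.ofReal r * ∫⁻ x, ENNReal.ofReal (F x * r⁻¹ * K x y) ∂μ := by
    intro y
    rw [← lintegral_const_mul' _ _ ENNReal.ofReal_ne_top]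
    refine lintegral_congr fun x => ?_
    rw [← ENNReal.ofReal_mul hr0.le]
    congr 1; field_simp
  simp_rw [h2]
  simp_rw [ENNReal.mul_rpow_of_nonneg _ _ hq.le]
  rw [lintegral_const_mul' _ _ (ENNReal.rpow_ne_top_of_nonneg hq.le ENNReal.ofReal_ne_top), ← hrI]
  calc (ENNReal.ofReal r ^ q * ∫⁻ y, (∫⁻ x, ENNReal.ofReal (F x * r⁻¹ * K x y) ∂μ) ^ q ∂μ) ^ (1 / q)
      ≤ (ENNReal.ofReal r ^ q * ENNReal.ofReal c ^ q) ^ (1 / q) := by gcongr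
    _ = ENNReal.ofReal c * ENNReal.ofReal r := by
        rw [← ENNReal.mul_rpow_of_nonneg _ _ hq.le, ← ENNReal.rpow_mul, mul_one_div_cancel hq.ne',
          ENNReal.rpow_one, mul_comm]

/-- Combination lemma. -/
lemma sw_comb {Ω : Type*} [MeasurableSpace Ω] {μ : Measure Ω} [SigmaFinite μ]
    {p s : ℝ} {K : Ω → Ω → ℝ} (c1 c2 : ℝ) (hc1 : 0 ≤ c1) (hc2 : 0 ≤ c2)
    (h : ∀ F H : Ω → ℝ, Measurable F → Measurable H → (∀ x, 0 ≤ F x) → (∀ x, 0 ≤ H x) →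
      ∃ G1 G2 : Ω → Ω → ℝ, Measurable (Function.uncurry G1) ∧ Measurable (Function.uncurry G2) ∧
        (∀ x y, 0 ≤ G1 x y) ∧ (∀ x y, 0 ≤ G2 x y) ∧
        (∀ᵐ x ∂μ, ∫⁻ y, ENNReal.ofReal (G1 x y) ∂μ ≤ ENNReal.ofReal (c1 * F x ^ p)) ∧
        (∀ᵐ y ∂μ, ∫⁻ x, ENNReal.ofReal (G2 x y) ∂μ ≤ ENNReal.ofReal (c2 * H y ^ s)) ∧
        (∀ᵐ x ∂μ, ∀ᵐ y ∂μ, F x * H y * K x y ≤ F x ^ p * H y ^ s + G1 x y + G2 x y)) :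
    SWNB μ p s K := by
  refine ⟨1 + c1 + c2, by positivity, fun F H hF hH hF0 hH0 hF1 hH1 => ?_⟩
  obtain ⟨G1, G2, hG1, hG2, hG10, hG20, hi1, hi2, hpt⟩ := h F H hF hH hF0 hH0
  have hG1' : Measurable fun z : Ω × Ω => G1 z.1 z.2 := hG1
  have hG2' : Measurable fun z : Ω × Ω => G2 z.1 z.2 := hG2
  have hFp : ∀ x, 0 ≤ F x ^ p := fun x => Real.rpow_nonneg (hF0 x) _
  have hHs : ∀ x, 0 ≤ H x ^ s := fun x => Real.rpow_nonneg (hH0 x) _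
  have m1 : ∀ x, Measurable (fun y => ENNReal.ofReal (G1 x y)) := fun x => by
    have : Measurable (fun y => G1 x y) := hG1'.comp measurable_prodMk_left
    fun_prop
  have m2 : ∀ x, Measurable (fun y => ENNReal.ofReal (G2 x y)) := fun x => by
    have : Measurable (fun y => G2 x y) := hG2'.comp measurable_prodMk_left
    fun_prop
  have mm1 : Measurable fun z : Ω × Ω => ENNReal.ofReal (G1 z.1 z.2) := by fun_prop
  have mm2 : Measurable fun z : Ω × Ω => ENNReal.ofReal (G2 z.1 z.2) := by fun_prop
  calc ∫⁻ x, ∫⁻ y, ENNReal.ofReal (F x * H y * K x y) ∂μ ∂μ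
      ≤ ∫⁻ x, ∫⁻ y, (ENNReal.ofReal (F x ^ p) * ENNReal.ofReal (H y ^ s)
          + ENNReal.ofReal (G1 x y) + ENNReal.ofReal (G2 x y)) ∂μ ∂μ := by
        refine lintegral_mono_ae ?_
        filter_upwards [hpt] with x hx
        refine lintegral_mono_ae ?_
        filter_upwards [hx] with y hy
        rw [← ENNReal.ofReal_mul (hFp x), ← ENNReal.ofReal_add (mul_nonneg (hFp x) (hHs y)) (hG10 x y),
          ← ENNReal.ofReal_add (add_nonneg (mul_nonneg (hFp x) (hHs y)) (hG10 x y)) (hG20 x y)]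
        exact ENNReal.ofReal_le_ofReal hy
    _ = ∫⁻ x, ((ENNReal.ofReal (F x ^ p) * ∫⁻ y, ENNReal.ofReal (H y ^ s) ∂μ)
          + ∫⁻ y, ENNReal.ofReal (G1 x y) ∂μ + ∫⁻ y, ENNReal.ofReal (G2 x y) ∂μ) ∂μ := by
        refine lintegral_congr fun x => ?_
        rw [lintegral_add_right _ (m2 x), lintegral_add_right _ (m1 x),
          lintegral_const_mul' _ _ ENNReal.ofReal_ne_top]
    _ = (∫⁻ x, ENNReal.ofReal (F x ^ p) ∂μ) * (∫⁻ y, ENNReal.ofReal (H y ^ s) ∂μ)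
          + ∫⁻ x, ∫⁻ y, ENNReal.ofReal (G1 x y) ∂μ ∂μ
          + ∫⁻ y, ∫⁻ x, ENNReal.ofReal (G2 x y) ∂μ ∂μ := by
        rw [lintegral_add_right _ mm2.lintegral_prod_right',
          lintegral_add_right _ mm1.lintegral_prod_right', lintegral_mul_const _ (by fun_prop),
          lintegral_lintegral_swap (f := fun x y => ENNReal.ofReal (G2 x y)) mm2.aemeasurable]
    _ ≤ 1 * 1 + ENNReal.ofReal c1 * 1 + ENNReal.ofReal c2 * 1 := by
        gcongr
        · refine (lintegral_mono_ae hi1).trans ?_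
          simp_rw [ENNReal.ofReal_mul hc1]
          rw [lintegral_const_mul' _ _ ENNReal.ofReal_ne_top]
          gcongr
        · refine (lintegral_mono_ae hi2).trans ?_
          simp_rw [ENNReal.ofReal_mul hc2]
          rw [lintegral_const_mul' _ _ ENNReal.ofReal_ne_top]
          gcongr
    _ = ENNReal.ofReal (1 + c1 + c2) := by
        rw [ENNReal.ofReal_add (by positivity) hc2, ENNReal.ofReal_add zero_le_one hc1]; simp

lemma SWNB.add_of_le {Ω : Type*} [MeasurableSpace Ω] {μ : Measure Ω} [SigmaFinite μ]
    {p s : ℝ} {K K1 K2 : Ω → Ω → ℝ} (C1 C2 : ℝ) (hC1 : 0 < C1) (hC2 : 0 < C2)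
    (hK1 : SWNB μ p s K1) (hK2 : SWNB μ p s K2)
    (hm1 : Measurable (Function.uncurry K1))
    (hm2 : Measurable (Function.uncurry K2))
    (n1 : ∀ x y, 0 ≤ K1 x y) (n2 : ∀ x y, 0 ≤ K2 x y)
    (hle : ∀ᵐ x ∂μ, ∀ᵐ y ∂μ, K x y ≤ C1 * K1 x y + C2 * K2 x y) : SWNB μ p s K := by
  obtain ⟨c1, hc1, h1⟩ := hK1
  obtain ⟨c2, hc2, h2⟩ := hK2
  refine ⟨C1 * c1 + C2 * c2, by positivity, fun F H hF hH hF0 hH0 hF1 hH1 => ?_⟩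
  have hm1' : Measurable fun z : Ω × Ω => K1 z.1 z.2 := hm1
  have hm2' : Measurable fun z : Ω × Ω => K2 z.1 z.2 := hm2
  have mm2 : Measurable fun z : Ω × Ω => ENNReal.ofReal (F z.1 * H z.2 * K2 z.1 z.2) := by fun_prop
  have m2 : ∀ x, Measurable (fun y => ENNReal.ofReal (F x * H y * K2 x y)) := fun x =>
    mm2.comp measurable_prodMk_left
  calc ∫⁻ x, ∫⁻ y, ENNReal.ofReal (F x * H y * K x y) ∂μ ∂μ
      ≤ ∫⁻ x, ∫⁻ y, (ENNReal.ofReal C1 * ENNReal.ofReal (F x * H y * K1 x y)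
        + ENNReal.ofReal C2 * ENNReal.ofReal (F x * H y * K2 x y)) ∂μ ∂μ := by
        refine lintegral_mono_ae ?_
        filter_upwards [hle] with x hx
        refine lintegral_mono_ae ?_
        filter_upwards [hx] with y hy
        have hFH := mul_nonneg (hF0 x) (hH0 y)
        have := mul_nonneg hFH (n1 x y)
        have := mul_nonneg hFH (n2 x y)
        rw [← ENNReal.ofReal_mul hC1.le, ← ENNReal.ofReal_mul hC2.le,
          ← ENNReal.ofReal_add (by positivity) (by positivity)]
        apply ENNReal.ofReal_le_ofReal
        calc _ ≤ F x * H y * (C1 * K1 x y + C2 * K2 x y) := mul_le_mul_of_nonneg_left hy hFH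
          _ = _ := by ring
    _ = ENNReal.ofReal C1 * (∫⁻ x, ∫⁻ y, ENNReal.ofReal (F x * H y * K1 x y) ∂μ ∂μ)
        + ENNReal.ofReal C2 * (∫⁻ x, ∫⁻ y, ENNReal.ofReal (F x * H y * K2 x y) ∂μ ∂μ) := by
        rw [← lintegral_const_mul' _ _ ENNReal.ofReal_ne_top,
          ← lintegral_const_mul' _ _ ENNReal.ofReal_ne_top,
          ← lintegral_add_right _ (mm2.lintegral_prod_right'.const_mul _)]
        refine lintegral_congr fun x => ?_
        rw [lintegral_add_right _ ((m2 x).const_mul _),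
          lintegral_const_mul' _ _ ENNReal.ofReal_ne_top,
          lintegral_const_mul' _ _ ENNReal.ofReal_ne_top]
    _ ≤ ENNReal.ofReal C1 * ENNReal.ofReal c1 + ENNReal.ofReal C2 * ENNReal.ofReal c2 := by
        gcongr
        · exact h1 F H hF hH hF0 hH0 hF1 hH1
        · exact h2 F H hF hH hF0 hH0 hF1 hH1
    _ = _ := by
        rw [← ENNReal.ofReal_mul hC1.le, ← ENNReal.ofReal_mul hC2.le,
          ← ENNReal.ofReal_add (by positivity) (by positivity)]


lemma sw_amgm {a b c u v w : ℝ} (ha : 0 ≤ a) (hb : 0 ≤ b) (hc : 0 ≤ c) (hu : 0 ≤ u) (hv : 0 ≤ v)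
    (hw : 0 ≤ w) (h : u + v + w = 1) : a ^ u * b ^ v * c ^ w ≤ a + b + c := by
  refine (Real.geom_mean_le_arith_mean3_weighted hu hv hw ha hb hc h).trans ?_
  have : u ≤ 1 := by linarith
  have : v ≤ 1 := by linarith
  have : w ≤ 1 := by linarith
  nlinarith

lemma sw_young {p q s : ℝ} (hp1 : 1 < p) (hpq : p ≤ q) (hqs : q.HolderConjugate s)
    {F H A1 A2 k : ℝ} (hF : 0 ≤ F) (hH : 0 ≤ H) (hA1 : 0 ≤ A1) (hA2 : 0 ≤ A2) (hk : 0 ≤ k) :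
    F * H * (A2 ^ (1 / q) * A1 ^ (1 - 1 / p) * k ^ (1 - 1 / p + 1 / q))
      ≤ F ^ p * H ^ s + F ^ p * (A2 * k) + H ^ s * (A1 * k) := by
  have hp0 : 0 < p := by linarith
  have hq0 := hqs.pos
  have hs0 := hqs.symm.pos
  have hip : 1 / p < 1 := by rw [div_lt_one hp0]; exact hp1
  have hiq : 0 < 1 / q := by positivity
  have hle : 1 / q ≤ 1 / p := one_div_le_one_div_of_le hp0 hpq
  have hFp : 0 ≤ F ^ p := Real.rpow_nonneg hF _
  have hHs : 0 ≤ H ^ s := Real.rpow_nonneg hH _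
  have key := sw_amgm (a := F ^ p * H ^ s) (b := F ^ p * (A2 * k)) (c := H ^ s * (A1 * k))
    (u := 1 / p - 1 / q) (v := 1 / q) (w := 1 - 1 / p) (by positivity) (by positivity)
    (by positivity) (by linarith) hiq.le (by linarith) (by ring)
  refine le_trans (le_of_eq ?_) key
  have hsum : s * (1 / p - 1 / q) + s * (1 - 1 / p) = 1 := by
    have h1 := hqs.inv_add_inv_eq_one
    have : 1 - 1 / q = 1 / s := by rw [one_div, one_div]; linarith
    calc _ = s * (1 - 1 / q) := by ring
      _ = 1 := by rw [this]; field_simp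
  have hsum2 : p * (1 / p - 1 / q) + p * (1 / q) = 1 := by
    field_simp; ring
  rw [Real.mul_rpow hFp hHs, Real.mul_rpow hFp (by positivity), Real.mul_rpow hA2 hk,
    Real.mul_rpow hHs (by positivity), Real.mul_rpow hA1 hk, ← Real.rpow_mul hF, ← Real.rpow_mul hF,
    ← Real.rpow_mul hH, ← Real.rpow_mul hH]
  have e1 : F = F ^ (p * (1 / p - 1 / q)) * F ^ (p * (1 / q)) := by
    rw [← Real.rpow_add_of_nonneg hF (mul_nonneg hp0.le (by linarith)) (by positivity), hsum2,
      Real.rpow_one]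
  have e2 : H = H ^ (s * (1 / p - 1 / q)) * H ^ (s * (1 - 1 / p)) := by
    rw [← Real.rpow_add_of_nonneg hH (mul_nonneg hs0.le (by linarith))
      (mul_nonneg hs0.le (by linarith)), hsum, Real.rpow_one]
  have e3 : k ^ (1 - 1 / p + 1 / q) = k ^ (1 / q) * k ^ (1 - 1 / p) := by
    rw [← Real.rpow_add_of_nonneg hk hiq.le (by linarith)]; congr 1; ring
  rw [e3]
  nth_rewrite 1 [e1]
  nth_rewrite 1 [e2]
  ring

lemma sw_hls_aux {p s N a b z : ℝ} (hp1 : 1 < p) (hs1 : 1 < s) (hN : 0 < N)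
    (ha : 0 < a) (hb : 0 < b) (hz : 0 < z) :
    a ^ (-(N / p)) * b ^ (-(N / s)) * z ^ (-(N * (1 - 1 / p + (1 - 1 / s))))
      ≤ a ^ (-N) * b ^ (-N)
        + a ^ (-(N / p)) * (z ^ (-(N * (1 - 1 / p + (1 - 1 / s)))) * max z a ^ (-(N / s)))
        + b ^ (-(N / s)) * (z ^ (-(N * (1 - 1 / p + (1 - 1 / s)))) * max z b ^ (-(N / p))) := by
  have hp0 : 0 < p := by linarith
  have hs0 : 0 < s := by linarith
  have hip : 1 / p < 1 := by rw [div_lt_one hp0]; exact hp1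
  have his : 1 / s < 1 := by rw [div_lt_one hs0]; exact hs1
  have pm1 : 0 < max z a := lt_max_of_lt_left hz
  have pm2 : 0 < max z b := lt_max_of_lt_left hz
  have t1 : 0 ≤ a ^ (-N) * b ^ (-N) := by positivity
  have t2 : 0 ≤ a ^ (-(N / p)) * (z ^ (-(N * (1 - 1 / p + (1 - 1 / s)))) * max z a ^ (-(N / s))) := by
    positivity
  have t3 : 0 ≤ b ^ (-(N / s)) * (z ^ (-(N * (1 - 1 / p + (1 - 1 / s)))) * max z b ^ (-(N / p))) := by
    positivity
  by_cases h1 : a ≤ z ∧ b ≤ z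
  · refine le_trans ?_ (le_trans (le_add_of_nonneg_right t2) (le_add_of_nonneg_right t3))
    have e1 : z ^ (-(N * (1 - 1 / p + (1 - 1 / s)))) = z ^ (-(N * (1 - 1 / p))) * z ^ (-(N * (1 - 1 / s))) := by
      rw [← Real.rpow_add hz]; congr 1; ring
    have e2 : a ^ (-N) = a ^ (-(N / p)) * a ^ (-(N * (1 - 1 / p))) := by
      rw [← Real.rpow_add ha]; congr 1; ring
    have e3 : b ^ (-N) = b ^ (-(N / s)) * b ^ (-(N * (1 - 1 / s))) := by
      rw [← Real.rpow_add hb]; congr 1; ring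
    have i1 : z ^ (-(N * (1 - 1 / p))) ≤ a ^ (-(N * (1 - 1 / p))) :=
      Real.rpow_le_rpow_of_nonpos ha h1.1 (by nlinarith)
    have i2 : z ^ (-(N * (1 - 1 / s))) ≤ b ^ (-(N * (1 - 1 / s))) :=
      Real.rpow_le_rpow_of_nonpos hb h1.2 (by nlinarith)
    rw [e1, e2, e3]
    calc _ ≤ a ^ (-(N / p)) * b ^ (-(N / s)) * (a ^ (-(N * (1 - 1 / p))) * b ^ (-(N * (1 - 1 / s)))) := by
          gcongr
      _ = _ := by ring
  · rcases le_total a b with hab | hab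
    · have hzb : z ≤ b := by
        by_contra hcon
        exact h1 ⟨by linarith, by linarith⟩
      have i1 : b ^ (-(N / s)) ≤ max z a ^ (-(N / s)) :=
        Real.rpow_le_rpow_of_nonpos pm1 (max_le hzb hab) (by
          have : 0 < N / s := by positivity
          linarith)
      have : a ^ (-(N / p)) * b ^ (-(N / s)) * z ^ (-(N * (1 - 1 / p + (1 - 1 / s))))
          ≤ a ^ (-(N / p)) * (z ^ (-(N * (1 - 1 / p + (1 - 1 / s)))) * max z a ^ (-(N / s))) := by
        rw [mul_assoc, mul_comm (b ^ _)]; gcongr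
      linarith
    · have hza : z ≤ a := by
        by_contra hcon
        exact h1 ⟨by linarith, by linarith⟩
      have i1 : a ^ (-(N / p)) ≤ max z b ^ (-(N / p)) :=
        Real.rpow_le_rpow_of_nonpos pm2 (max_le hza hab) (by
          have : 0 < N / p := by positivity
          linarith)
      have : a ^ (-(N / p)) * b ^ (-(N / s)) * z ^ (-(N * (1 - 1 / p + (1 - 1 / s))))
          ≤ b ^ (-(N / s)) * (z ^ (-(N * (1 - 1 / p + (1 - 1 / s)))) * max z b ^ (-(N / p))) := by
        rw [mul_comm (a ^ _), mul_assoc, mul_comm (a ^ _)]; gcongr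
      linarith

lemma sw_hls_pt_s9 {p s N F H z : ℝ} (hp1 : 1 < p) (hs1 : 1 < s) (hN : 0 < N)
    (hF : 0 ≤ F) (hH : 0 ≤ H) (hz : 0 < z) :
    F * H * z ^ (-(N * (1 - 1 / p + (1 - 1 / s))))
      ≤ F ^ p * H ^ s
        + F * (z ^ (-(N * (1 - 1 / p + (1 - 1 / s)))) * max z (F ^ (-(p / N))) ^ (-(N / s)))
        + H * (z ^ (-(N * (1 - 1 / p + (1 - 1 / s)))) * max z (H ^ (-(s / N))) ^ (-(N / p))) := by
  have hp0 : 0 < p := by linarith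
  have hs0 : 0 < s := by linarith
  have q1 : 0 ≤ max z (F ^ (-(p / N))) := le_max_of_le_left hz.le
  have q2 : 0 ≤ max z (H ^ (-(s / N))) := le_max_of_le_left hz.le
  rcases hF.eq_or_lt with h0 | hF'
  · have : 0 ≤ F ^ p * H ^ s
        + F * (z ^ (-(N * (1 - 1 / p + (1 - 1 / s)))) * max z (F ^ (-(p / N))) ^ (-(N / s)))
        + H * (z ^ (-(N * (1 - 1 / p + (1 - 1 / s)))) * max z (H ^ (-(s / N))) ^ (-(N / p))) := by
      positivity
    refine le_trans (le_of_eq ?_) this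
    rw [← h0]; ring
  rcases hH.eq_or_lt with h0 | hH'
  · have : 0 ≤ F ^ p * H ^ s
        + F * (z ^ (-(N * (1 - 1 / p + (1 - 1 / s)))) * max z (F ^ (-(p / N))) ^ (-(N / s)))
        + H * (z ^ (-(N * (1 - 1 / p + (1 - 1 / s)))) * max z (H ^ (-(s / N))) ^ (-(N / p))) := by
      positivity
    refine le_trans (le_of_eq ?_) this
    rw [← h0]; ring
  have := sw_hls_aux (a := F ^ (-(p / N))) (b := H ^ (-(s / N))) hp1 hs1 hN (by positivity)
    (by positivity) hz
  have e1 : (F ^ (-(p / N))) ^ (-(N / p)) = F := by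
    rw [← Real.rpow_mul hF]
    have : -(p / N) * -(N / p) = 1 := by field_simp
    rw [this, Real.rpow_one]
  have e2 : (H ^ (-(s / N))) ^ (-(N / s)) = H := by
    rw [← Real.rpow_mul hH]
    have : -(s / N) * -(N / s) = 1 := by field_simp
    rw [this, Real.rpow_one]
  have e3 : (F ^ (-(p / N))) ^ (-N) = F ^ p := by
    rw [← Real.rpow_mul hF]
    congr 1; field_simp
  have e4 : (H ^ (-(s / N))) ^ (-N) = H ^ s := by
    rw [← Real.rpow_mul hH]
    congr 1; field_simp
  rw [e1, e2, e3, e4] at this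
  exact this

lemma sw_comparable {a b e : ℝ} (ha : 0 < a) (h1 : a / 2 ≤ b) (h2 : b ≤ 2 * a) :
    b ^ e ≤ 2 ^ |e| * a ^ e := by
  have hb : 0 < b := by linarith
  rcases le_total 0 e with he | he
  · rw [abs_of_nonneg he, ← Real.mul_rpow (by norm_num) ha.le]
    exact Real.rpow_le_rpow hb.le h2 he
  · rw [abs_of_nonpos he]
    have : (2:ℝ) ^ (-e) * a ^ e = (a / 2) ^ e := by
      rw [Real.div_rpow ha.le (by norm_num), Real.rpow_neg (by norm_num)]
      field_simp
    rw [this]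
    exact Real.rpow_le_rpow_of_nonpos (by linarith) h1 he


/-- The ambient space. -/
abbrev SWE (n m : ℕ) := EuclideanSpace ℝ (Fin n) × EuclideanSpace ℝ (Fin m)

instance sw_haar (n m : ℕ) : (volume : Measure (SWE n m)).IsAddHaarMeasure := by
  change ((volume : Measure (EuclideanSpace ℝ (Fin n))).prod
    (volume : Measure (EuclideanSpace ℝ (Fin m)))).IsAddHaarMeasure
  infer_instance

lemma sw_finrank (n m : ℕ) : (Module.finrank ℝ (SWE n m) : ℝ) = (n : ℝ) + m := by
  simp [SWE]

lemma sw_nontriv_snd {m : ℕ} (hm : 1 ≤ m) : Nontrivial (EuclideanSpace ℝ (Fin m)) := by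
  apply Module.nontrivial_of_finrank_pos (R := ℝ)
  simp; omega

lemma sw_nontriv {n m : ℕ} (hm : 1 ≤ m) : Nontrivial (SWE n m) := by
  have := sw_nontriv_snd hm
  infer_instance

lemma sw_ae_snd {n m : ℕ} (hm : 1 ≤ m) : ∀ᵐ X : SWE n m, X.2 ≠ 0 := by
  have := sw_nontriv_snd hm
  have h : ∀ᵐ x : EuclideanSpace ℝ (Fin m), x ≠ 0 := Measure.ae_ne _ _
  exact Measure.quasiMeasurePreserving_snd.ae h

lemma sw_ae_ne {n m : ℕ} (hm : 1 ≤ m) (X : SWE n m) : ∀ᵐ Y : SWE n m, Y ≠ X := by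
  have := sw_nontriv (n := n) hm
  exact Measure.ae_ne _ _

lemma sw_near_int (n m : ℕ) (hm : 1 ≤ m) (A τ : ℝ) (hA : 0 < A + ((n : ℝ) + m))
    (hτ : A + ((n : ℝ) + m) < τ) :
    ∃ C : ℝ, 0 < C ∧ ∀ ρ : ℝ, 0 < ρ → ∀ X : SWE n m,
      ∫⁻ Y : SWE n m, ENNReal.ofReal (‖X - Y‖ ^ A * max ‖X - Y‖ ρ ^ (-τ))
        ≤ ENNReal.ofReal (C * ρ ^ (A + ((n : ℝ) + m) - τ)) := by
  have := sw_nontriv (n := n) hm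
  obtain ⟨C, hC, h⟩ := sw_rad (volume : Measure (SWE n m)) A τ (by rwa [sw_finrank])
    (by rwa [sw_finrank])
  refine ⟨C, hC, fun ρ hρ X => ?_⟩
  have := h ρ hρ
  rw [sw_finrank] at this
  refine le_trans (le_of_eq ?_) this
  simp_rw [norm_sub_rev X]
  exact lintegral_sub_right_eq_self
    (fun Z : SWE n m => ENNReal.ofReal (‖Z‖ ^ A * max ‖Z‖ ρ ^ (-τ))) X

lemma sw_far_int (n m : ℕ) (hm : 1 ≤ m) (A B : ℝ) (hA : 0 < A + m) (hB : 0 < B) :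
    ∃ C : ℝ, 0 < C ∧ ∀ ρ : ℝ, 0 < ρ → ∀ (x : EuclideanSpace ℝ (Fin n)) (M : SWE n m → ℝ),
      (∀ Y, ‖x - Y.1‖ ≤ M Y) → (∀ Y, ‖Y.2‖ ≤ M Y) → (∀ Y, ρ ≤ M Y) →
      ∫⁻ Y : SWE n m, ENNReal.ofReal (‖Y.2‖ ^ A * M Y ^ (-((n : ℝ) + m + A + B)))
        ≤ ENNReal.ofReal (C * ρ ^ (-B)) := by
  have := sw_nontriv_snd hm
  obtain ⟨C1, hC1, h1⟩ := sw_rad_scale (volume : Measure (EuclideanSpace ℝ (Fin n))) 0 (n + B / 2)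
    (sw_rad_fin0 _ _ (by simp; linarith))
  obtain ⟨C2, hC2, h2⟩ := sw_rad (volume : Measure (EuclideanSpace ℝ (Fin m))) A (A + m + B / 2)
    (by simpa using hA) (by simp; linarith)
  refine ⟨C1 * C2, by positivity, fun ρ hρ x M hM1 hM2 hM3 => ?_⟩
  have h1' := h1 ρ hρ
  have h2' := h2 ρ hρ
  simp only [finrank_euclideanSpace, Fintype.card_fin] at h1' h2'
  rw [← lintegral_sub_left_eq_self _ x] at h1'
  calc ∫⁻ Y : SWE n m, ENNReal.ofReal (‖Y.2‖ ^ A * M Y ^ (-((n : ℝ) + m + A + B)))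
      ≤ ∫⁻ Y : SWE n m, ENNReal.ofReal (‖x - Y.1‖ ^ (0:ℝ) * max ‖x - Y.1‖ ρ ^ (-((n:ℝ) + B / 2)))
        * ENNReal.ofReal (‖Y.2‖ ^ A * max ‖Y.2‖ ρ ^ (-(A + m + B / 2))) := by
        refine lintegral_mono fun Y => ?_
        have p1 : 0 < max ‖x - Y.1‖ ρ := lt_max_of_lt_right hρ
        have p2 : 0 < max ‖Y.2‖ ρ := lt_max_of_lt_right hρ
        have pM : 0 < M Y := lt_of_lt_of_le hρ (hM3 Y)
        dsimp only
        rw [← ENNReal.ofReal_mul (by positivity)]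
        apply ENNReal.ofReal_le_ofReal
        have e : M Y ^ (-((n : ℝ) + m + A + B))
            = M Y ^ (-((n:ℝ) + B / 2)) * M Y ^ (-(A + m + B / 2)) := by
          rw [← Real.rpow_add pM]; congr 1; ring
        have i1 : M Y ^ (-((n:ℝ) + B / 2)) ≤ max ‖x - Y.1‖ ρ ^ (-((n:ℝ) + B / 2)) :=
          Real.rpow_le_rpow_of_nonpos p1 (max_le (hM1 Y) (hM3 Y)) (by
            have : (0:ℝ) ≤ n := Nat.cast_nonneg n
            linarith)
        have i2 : M Y ^ (-(A + m + B / 2)) ≤ max ‖Y.2‖ ρ ^ (-(A + m + B / 2)) :=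
          Real.rpow_le_rpow_of_nonpos p2 (max_le (hM2 Y) (hM3 Y)) (by linarith)
        rw [e, Real.rpow_zero, one_mul]
        calc _ ≤ ‖Y.2‖ ^ A * (max ‖x - Y.1‖ ρ ^ (-((n:ℝ) + B / 2))
                * max ‖Y.2‖ ρ ^ (-(A + m + B / 2))) := by gcongr
          _ = _ := by ring
    _ = (∫⁻ y : EuclideanSpace ℝ (Fin n),
          ENNReal.ofReal (‖x - y‖ ^ (0:ℝ) * max ‖x - y‖ ρ ^ (-((n:ℝ) + B / 2))))
        * ∫⁻ y : EuclideanSpace ℝ (Fin m),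
          ENNReal.ofReal (‖y‖ ^ A * max ‖y‖ ρ ^ (-(A + m + B / 2))) :=
        lintegral_prod_mul (μ := (volume : Measure (EuclideanSpace ℝ (Fin n))))
          (ν := (volume : Measure (EuclideanSpace ℝ (Fin m))))
          (f := fun y => ENNReal.ofReal (‖x - y‖ ^ (0:ℝ) * max ‖x - y‖ ρ ^ (-((n:ℝ) + B / 2))))
          (g := fun y => ENNReal.ofReal (‖y‖ ^ A * max ‖y‖ ρ ^ (-(A + m + B / 2))))
          (by fun_prop) (by fun_prop)
    _ ≤ _ := by
        refine (mul_le_mul' h1' h2').trans (le_of_eq ?_)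
        rw [← ENNReal.ofReal_mul (by positivity)]
        congr 1
        have : ρ ^ (-B) = ρ ^ (0 + (n:ℝ) - (n + B / 2)) * ρ ^ (A + m - (A + m + B / 2)) := by
          rw [← Real.rpow_add hρ]; congr 1; ring
        rw [this]; ring

/-- far kernel -/
def swM {n m : ℕ} (X Y : SWE n m) : ℝ := max (max ‖X.1 - Y.1‖ ‖Y.2‖) ‖X.2‖

lemma swM_meas (n m : ℕ) : Measurable fun z : SWE n m × SWE n m => swM z.1 z.2 := by
  unfold swM; fun_prop

lemma sw_far_s9 (n m : ℕ) (hm : 1 ≤ m) (lam p q s α β : ℝ)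
    (hp1 : 1 < p) (hpq : p ≤ q) (hqs : q.HolderConjugate s)
    (hα : α < m * (1 - 1 / p)) (hβ : β < m / q)
    (hbal : α + β + lam = ((n : ℝ) + m) * (1 - 1 / p + 1 / q)) :
    SWNB (volume : Measure (SWE n m)) p s
      (fun X Y => ‖X.2‖ ^ (-α) * ‖Y.2‖ ^ (-β) * swM X Y ^ (-lam)) := by
  have hp0 : 0 < p := by linarith
  have hq0 := hqs.pos
  have hip : 1 / p < 1 := by rw [div_lt_one hp0]; exact hp1
  have hiq : 0 < 1 / q := by positivity
  set P := 1 - 1 / p with hP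
  set Q := 1 / q with hQ
  have hP0 : 0 < P := by linarith
  have hβ' : β < m * Q := by rw [hQ, mul_one_div]; exact hβ
  obtain ⟨a, ha1, ha2⟩ := exists_between
    (max_lt ((div_lt_iff₀ hP0).2 hα) ((div_lt_iff₀ hiq).2 hβ'))
  have ha3 : α < a * P := (div_lt_iff₀ hP0).1 (lt_of_le_of_lt (le_max_left _ _) ha1)
  have ha4 : β < a * Q := (div_lt_iff₀ hiq).1 (lt_of_le_of_lt (le_max_right _ _) ha1)
  set R := P + Q with hR
  have hR0 : 0 < R := by positivity
  set B := (-α + a * P) / R with hB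
  set D := (-β + a * Q) / R with hD
  have hBR : B * R = -α + a * P := div_mul_cancel₀ _ hR0.ne'
  have hDR : D * R = -β + a * Q := div_mul_cancel₀ _ hR0.ne'
  have hB0 : 0 < B := div_pos (by linarith) hR0
  have hD0 : 0 < D := div_pos (by linarith) hR0
  have hBa : 0 < (B - a) + m := by
    have : 0 < ((B - a) + m) * R := by
      have : ((B - a) + m) * R = -α + a * P + (m - a) * (P + Q) := by rw [← hBR, hR]; ring
      rw [this]; nlinarith
    exact (pos_iff_pos_of_mul_pos this).2 hR0
  have hDa : 0 < (D - a) + m := by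
    have : 0 < ((D - a) + m) * R := by
      have : ((D - a) + m) * R = -β + a * Q + (m - a) * (P + Q) := by rw [← hDR, hR]; ring
      rw [this]; nlinarith
    exact (pos_iff_pos_of_mul_pos this).2 hR0
  have hL : lam / R = (n : ℝ) + m + (D - a) + B := by
    rw [div_eq_iff hR0.ne']
    have : ((n : ℝ) + m + (D - a) + B) * R = ((n : ℝ) + m) * R + D * R + B * R - a * R := by ring
    rw [this, hBR, hDR, ← hbal, hR]; ring
  have hL' : lam / R = (n : ℝ) + m + (B - a) + D := by rw [hL]; ring
  obtain ⟨C1, hC1, h1⟩ := sw_far_int n m hm (D - a) B hDa hB0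
  obtain ⟨C2, hC2, h2⟩ := sw_far_int n m hm (B - a) D hBa hD0
  have hae := sw_ae_snd (n := n) hm
  refine sw_comb C1 C2 hC1.le hC2.le fun F H hF hH hF0 hH0 => ?_
  have hMm := swM_meas n m
  have hM0 : ∀ X Y : SWE n m, 0 ≤ swM X Y := fun X Y => le_max_of_le_right (norm_nonneg _)
  refine ⟨fun X Y => F X ^ p * (‖Y.2‖ ^ (-a) * (‖X.2‖ ^ B * ‖Y.2‖ ^ D * swM X Y ^ (-(lam / R)))),
    fun X Y => H Y ^ s * (‖X.2‖ ^ (-a) * (‖X.2‖ ^ B * ‖Y.2‖ ^ D * swM X Y ^ (-(lam / R)))),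
    ?_, ?_, ?_, ?_, ?_, ?_, ?_⟩
  · simp only [Function.uncurry_def]; fun_prop
  · simp only [Function.uncurry_def]; fun_prop
  · intro X Y
    have := hM0 X Y
    have := hF0 X
    positivity
  · intro X Y
    have := hM0 X Y
    have := hH0 Y
    positivity
  · filter_upwards [hae] with X hX
    have hx : 0 < ‖X.2‖ := norm_pos_iff.2 hX
    have hFp : 0 ≤ F X ^ p := Real.rpow_nonneg (hF0 X) _
    have := h1 ‖X.2‖ hx X.1 (fun Y => swM X Y)
      (fun Y => (le_max_left _ _).trans (le_max_left _ _))
      (fun Y => (le_max_right _ _).trans (le_max_left _ _)) (fun Y => le_max_right _ _)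
    rw [← hL] at this
    calc _ = ∫⁻ Y : SWE n m, ENNReal.ofReal (F X ^ p * ‖X.2‖ ^ B) *
            ENNReal.ofReal (‖Y.2‖ ^ (D - a) * swM X Y ^ (-(lam / R))) := by
          refine lintegral_congr_ae ?_
          filter_upwards [hae] with Y hY
          have hy : 0 < ‖Y.2‖ := norm_pos_iff.2 hY
          rw [← ENNReal.ofReal_mul (by positivity), sub_eq_add_neg, Real.rpow_add hy]
          congr 1; ring
      _ ≤ ENNReal.ofReal (F X ^ p * ‖X.2‖ ^ B) * ENNReal.ofReal (C1 * ‖X.2‖ ^ (-B)) := by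
          rw [lintegral_const_mul' _ _ ENNReal.ofReal_ne_top]; gcongr
      _ = _ := by
          rw [← ENNReal.ofReal_mul (by positivity)]
          congr 1
          rw [Real.rpow_neg hx.le]; field_simp
  · filter_upwards [hae] with Y hY
    have hy : 0 < ‖Y.2‖ := norm_pos_iff.2 hY
    have hFp : 0 ≤ H Y ^ s := Real.rpow_nonneg (hH0 Y) _
    have := h2 ‖Y.2‖ hy Y.1 (fun X => swM X Y)
      (fun X => by rw [norm_sub_rev]; exact (le_max_left _ _).trans (le_max_left _ _))
      (fun X => le_max_right _ _) (fun X => (le_max_right _ _).trans (le_max_left _ _))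
    rw [← hL'] at this
    calc _ = ∫⁻ X : SWE n m, ENNReal.ofReal (H Y ^ s * ‖Y.2‖ ^ D) *
            ENNReal.ofReal (‖X.2‖ ^ (B - a) * swM X Y ^ (-(lam / R))) := by
          refine lintegral_congr_ae ?_
          filter_upwards [hae] with X hX
          have hx : 0 < ‖X.2‖ := norm_pos_iff.2 hX
          rw [← ENNReal.ofReal_mul (by positivity), sub_eq_add_neg, Real.rpow_add hx]
          congr 1; ring
      _ ≤ ENNReal.ofReal (H Y ^ s * ‖Y.2‖ ^ D) * ENNReal.ofReal (C2 * ‖Y.2‖ ^ (-D)) := by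
          rw [lintegral_const_mul' _ _ ENNReal.ofReal_ne_top]; gcongr
      _ = _ := by
          rw [← ENNReal.ofReal_mul (by positivity)]
          congr 1
          rw [Real.rpow_neg hy.le]; field_simp
  · filter_upwards [hae] with X hX
    filter_upwards [hae] with Y hY
    have hx : 0 < ‖X.2‖ := norm_pos_iff.2 hX
    have hy : 0 < ‖Y.2‖ := norm_pos_iff.2 hY
    have hM : 0 ≤ swM X Y := hM0 X Y
    refine le_trans (le_of_eq ?_) (sw_young hp1 hpq hqs (hF0 X) (hH0 Y) (A1 := ‖X.2‖ ^ (-a))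
      (A2 := ‖Y.2‖ ^ (-a)) (k := ‖X.2‖ ^ B * ‖Y.2‖ ^ D * swM X Y ^ (-(lam / R)))
      (by positivity) (by positivity) (by positivity))
    congr 1
    rw [← hP, ← hQ, ← hR, Real.mul_rpow (by positivity) (by positivity),
      Real.mul_rpow (by positivity) (by positivity), ← Real.rpow_mul hx.le, ← Real.rpow_mul hx.le,
      ← Real.rpow_mul hy.le, ← Real.rpow_mul hy.le, ← Real.rpow_mul hM, hBR, hDR, neg_mul,
      neg_mul, neg_mul, div_mul_cancel₀ _ hR0.ne']
    have e1 : ‖X.2‖ ^ (-α) = ‖X.2‖ ^ (-(a * P)) * ‖X.2‖ ^ (-α + a * P) := by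
      rw [← Real.rpow_add hx]; congr 1; ring
    have e2 : ‖Y.2‖ ^ (-β) = ‖Y.2‖ ^ (-(a * Q)) * ‖Y.2‖ ^ (-β + a * Q) := by
      rw [← Real.rpow_add hy]; congr 1; ring
    rw [e1, e2]; ring

lemma sw_near1 (n m : ℕ) (hm : 1 ≤ m) (lam p q s γ : ℝ)
    (hp1 : 1 < p) (hpq : p ≤ q) (hqs : q.HolderConjugate s) (hγ : 0 < γ)
    (hbal : γ + lam = ((n : ℝ) + m) * (1 - 1 / p + 1 / q)) :
    SWNB (volume : Measure (SWE n m)) p s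
      (fun X Y => ‖X - Y‖ ^ (-lam) * (‖X.2‖ ^ γ * ‖Y.2‖ ^ γ *
        max ‖X - Y‖ (max ‖X.2‖ ‖Y.2‖) ^ (-(3 * γ)))) := by
  have hp0 : 0 < p := by linarith
  have hq0 := hqs.pos
  have hip : 1 / p < 1 := by rw [div_lt_one hp0]; exact hp1
  have hiq : 0 < 1 / q := by positivity
  set R := 1 - 1 / p + 1 / q with hR
  have hR0 : 0 < R := by linarith
  set δ := γ / R with hδ
  have hδ0 : 0 < δ := div_pos hγ hR0
  have hδR : δ * R = γ := div_mul_cancel₀ _ hR0.ne'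
  have hL : -(lam / R) + ((n : ℝ) + m) = δ := by
    rw [hδ]; field_simp; linarith
  obtain ⟨C, hC, h1⟩ := sw_near_int n m hm (-(lam / R)) (2 * δ) (by linarith) (by linarith)
  have hae := sw_ae_snd (n := n) hm
  refine sw_comb C C hC.le hC.le fun F H hF hH hF0 hH0 => ?_
  -- pointwise bound of the kernel
  have hbd : ∀ z a b : ℝ, 0 ≤ z → 0 < a → 0 < b →
      a ^ δ * b ^ δ * max z (max a b) ^ (-(3 * δ)) ≤ a ^ δ * max z a ^ (-(2 * δ)) := by
    intro z a b hz ha hb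
    have hw : 0 < max z (max a b) := lt_max_of_lt_right (lt_max_of_lt_left ha)
    have hw' : 0 < max z a := lt_max_of_lt_right ha
    have e : max z (max a b) ^ (-(3 * δ))
        = (max z (max a b) ^ δ)⁻¹ * max z (max a b) ^ (-(2 * δ)) := by
      rw [← Real.rpow_neg hw.le, ← Real.rpow_add hw]; congr 1; ring
    have i1 : b ^ δ ≤ max z (max a b) ^ δ :=
      Real.rpow_le_rpow hb.le ((le_max_right _ _).trans (le_max_right _ _)) hδ0.le
    have i2 : max z (max a b) ^ (-(2 * δ)) ≤ max z a ^ (-(2 * δ)) :=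
      Real.rpow_le_rpow_of_nonpos hw' (max_le_max le_rfl (le_max_left _ _)) (by linarith)
    have hw2 : 0 < max z (max a b) ^ δ := by positivity
    rw [e]
    calc _ = a ^ δ * (b ^ δ * (max z (max a b) ^ δ)⁻¹) * max z (max a b) ^ (-(2 * δ)) := by ring
      _ ≤ a ^ δ * 1 * max z a ^ (-(2 * δ)) := by
          gcongr
          rw [← div_eq_mul_inv]; exact (div_le_one hw2).2 i1
      _ = _ := by ring
  refine ⟨fun X Y => F X ^ p * (‖X - Y‖ ^ (-(lam / R)) * (‖X.2‖ ^ δ * max ‖X - Y‖ ‖X.2‖ ^ (-(2 * δ)))),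
    fun X Y => H Y ^ s * (‖X - Y‖ ^ (-(lam / R)) * (‖Y.2‖ ^ δ * max ‖X - Y‖ ‖Y.2‖ ^ (-(2 * δ)))),
    ?_, ?_, ?_, ?_, ?_, ?_, ?_⟩
  · simp only [Function.uncurry_def]; fun_prop
  · simp only [Function.uncurry_def]; fun_prop
  · intro X Y
    have := hF0 X
    positivity
  · intro X Y
    have := hH0 Y
    positivity
  · filter_upwards [hae] with X hX
    have hx : 0 < ‖X.2‖ := norm_pos_iff.2 hX
    have hFp : 0 ≤ F X ^ p := Real.rpow_nonneg (hF0 X) _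
    have := h1 ‖X.2‖ hx X
    rw [hL] at this
    calc _ = ∫⁻ Y : SWE n m, ENNReal.ofReal (F X ^ p * ‖X.2‖ ^ δ) *
            ENNReal.ofReal (‖X - Y‖ ^ (-(lam / R)) * max ‖X - Y‖ ‖X.2‖ ^ (-(2 * δ))) := by
          refine lintegral_congr fun Y => ?_
          rw [← ENNReal.ofReal_mul (by positivity)]
          congr 1; ring
      _ ≤ ENNReal.ofReal (F X ^ p * ‖X.2‖ ^ δ) * ENNReal.ofReal (C * ‖X.2‖ ^ (δ - 2 * δ)) := by
          rw [lintegral_const_mul' _ _ ENNReal.ofReal_ne_top]; gcongr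
      _ = _ := by
          rw [← ENNReal.ofReal_mul (by positivity)]
          congr 1
          have : δ - 2 * δ = -δ := by ring
          rw [this, Real.rpow_neg hx.le]; field_simp
  · filter_upwards [hae] with Y hY
    have hy : 0 < ‖Y.2‖ := norm_pos_iff.2 hY
    have hFp : 0 ≤ H Y ^ s := Real.rpow_nonneg (hH0 Y) _
    have := h1 ‖Y.2‖ hy Y
    rw [hL] at this
    calc _ = ∫⁻ X : SWE n m, ENNReal.ofReal (H Y ^ s * ‖Y.2‖ ^ δ) *
            ENNReal.ofReal (‖Y - X‖ ^ (-(lam / R)) * max ‖Y - X‖ ‖Y.2‖ ^ (-(2 * δ))) := by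
          refine lintegral_congr fun X => ?_
          rw [← ENNReal.ofReal_mul (by positivity), norm_sub_rev Y X]
          congr 1; ring
      _ ≤ ENNReal.ofReal (H Y ^ s * ‖Y.2‖ ^ δ) * ENNReal.ofReal (C * ‖Y.2‖ ^ (δ - 2 * δ)) := by
          rw [lintegral_const_mul' _ _ ENNReal.ofReal_ne_top]; gcongr
      _ = _ := by
          rw [← ENNReal.ofReal_mul (by positivity)]
          congr 1
          have : δ - 2 * δ = -δ := by ring
          rw [this, Real.rpow_neg hy.le]; field_simp
  · filter_upwards [hae] with X hX
    filter_upwards [hae] with Y hY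
    have hx : 0 < ‖X.2‖ := norm_pos_iff.2 hX
    have hy : 0 < ‖Y.2‖ := norm_pos_iff.2 hY
    have hFp : 0 ≤ F X ^ p := Real.rpow_nonneg (hF0 X) _
    have hHs : 0 ≤ H Y ^ s := Real.rpow_nonneg (hH0 Y) _
    have b1 := hbd ‖X - Y‖ ‖X.2‖ ‖Y.2‖ (norm_nonneg _) hx hy
    have b2 := hbd ‖X - Y‖ ‖Y.2‖ ‖X.2‖ (norm_nonneg _) hy hx
    rw [max_comm ‖Y.2‖ ‖X.2‖, mul_comm (‖Y.2‖ ^ δ)] at b2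
    have hW : 0 ≤ max ‖X - Y‖ (max ‖X.2‖ ‖Y.2‖) := le_max_of_le_left (norm_nonneg _)
    refine le_trans (le_trans (le_of_eq ?_) (sw_young hp1 hpq hqs (hF0 X) (hH0 Y) (A1 := 1)
      (A2 := 1) (k := ‖X - Y‖ ^ (-(lam / R)) * (‖X.2‖ ^ δ * ‖Y.2‖ ^ δ *
        max ‖X - Y‖ (max ‖X.2‖ ‖Y.2‖) ^ (-(3 * δ))))
      (by positivity) (by positivity) (by positivity))) ?_
    · congr 1
      rw [← hR, Real.one_rpow, Real.one_rpow, one_mul, one_mul,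
        Real.mul_rpow (by positivity) (by positivity),
        Real.mul_rpow (by positivity) (by positivity),
        Real.mul_rpow (by positivity) (by positivity), ← Real.rpow_mul hx.le,
        ← Real.rpow_mul hy.le, ← Real.rpow_mul hW, ← Real.rpow_mul (norm_nonneg _), hδR,
        neg_mul, neg_mul, div_mul_cancel₀ _ hR0.ne', mul_assoc 3 δ R, hδR]
    · rw [one_mul]
      gcongr

lemma sw_near2 (n m : ℕ) (hm : 1 ≤ m) (lam p q s : ℝ) (hlam1 : lam < (n : ℝ) + m)
    (hp1 : 1 < p) (hqs : q.HolderConjugate s)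
    (hbal : lam = ((n : ℝ) + m) * (1 - 1 / p + 1 / q)) :
    SWNB (volume : Measure (SWE n m)) p s (fun X Y => ‖X - Y‖ ^ (-lam)) := by
  have hp0 : 0 < p := by linarith
  have hq0 := hqs.pos
  have hs0 := hqs.symm.pos
  have hs1 := hqs.symm.lt
  have hip : 1 / p < 1 := by rw [div_lt_one hp0]; exact hp1
  have hip0 : 0 < 1 / p := by positivity
  have hiq : 0 < 1 / q := by positivity
  have his : 1 / q = 1 - 1 / s := by
    have h1 := hqs.inv_add_inv_eq_one
    rw [one_div, one_div]; linarith
  set N : ℝ := (n : ℝ) + m with hN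
  have hN0 : 0 < N := by
    have : (1:ℝ) ≤ m := by exact_mod_cast hm
    have : (0:ℝ) ≤ n := Nat.cast_nonneg n
    rw [hN]; linarith
  have eNs : N / s = N - N * (1 / q) := by rw [his]; ring
  have eNp : N / p = N * (1 / p) := by ring
  have hl : -lam + N = N * (1 / p) - N * (1 / q) := by rw [hbal]; ring
  have hNq : 0 < N * (1 / q) := by positivity
  have hNp : N * (1 / p) < N := by nlinarith
  obtain ⟨C1, hC1, h1⟩ := sw_near_int n m hm (-lam) (N / s) (by linarith)
    (by rw [← hN, hl, eNs]; linarith)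
  obtain ⟨C2, hC2, h2⟩ := sw_near_int n m hm (-lam) (N / p) (by linarith)
    (by rw [← hN, hl, eNp]; linarith)
  rw [← hN] at h1 h2
  refine sw_comb C1 C2 hC1.le hC2.le fun F H hF hH hF0 hH0 => ?_
  refine ⟨fun X Y => F X * (‖X - Y‖ ^ (-lam) * max ‖X - Y‖ (F X ^ (-(p / N))) ^ (-(N / s))),
    fun X Y => H Y * (‖X - Y‖ ^ (-lam) * max ‖X - Y‖ (H Y ^ (-(s / N))) ^ (-(N / p))),
    ?_, ?_, ?_, ?_, ?_, ?_, ?_⟩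
  · simp only [Function.uncurry_def]; fun_prop
  · simp only [Function.uncurry_def]; fun_prop
  · intro X Y
    have := hF0 X
    positivity
  · intro X Y
    have := hH0 Y
    positivity
  · refine Filter.Eventually.of_forall fun X => ?_
    rcases (hF0 X).eq_or_lt with h0 | hpos
    · simp [← h0]
    have := h1 (F X ^ (-(p / N))) (by positivity) X
    calc _ = ∫⁻ Y : SWE n m, ENNReal.ofReal (F X) * ENNReal.ofReal
            (‖X - Y‖ ^ (-lam) * max ‖X - Y‖ (F X ^ (-(p / N))) ^ (-(N / s))) := by
          refine lintegral_congr fun Y => ?_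
          rw [← ENNReal.ofReal_mul hpos.le]
      _ ≤ ENNReal.ofReal (F X) * ENNReal.ofReal (C1 * (F X ^ (-(p / N))) ^ (-lam + N - N / s)) := by
          rw [lintegral_const_mul' _ _ ENNReal.ofReal_ne_top]; gcongr
      _ = _ := by
          rw [← ENNReal.ofReal_mul hpos.le, ← Real.rpow_mul hpos.le]
          congr 1
          have e : -(p / N) * (-lam + N - N / s) = p - 1 := by
            rw [hl, eNs]; field_simp; ring
          rw [e, Real.rpow_sub_one hpos.ne']; field_simp
  · refine Filter.Eventually.of_forall fun Y => ?_
    rcases (hH0 Y).eq_or_lt with h0 | hpos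
    · simp [← h0]
    have := h2 (H Y ^ (-(s / N))) (by positivity) Y
    calc _ = ∫⁻ X : SWE n m, ENNReal.ofReal (H Y) * ENNReal.ofReal
            (‖Y - X‖ ^ (-lam) * max ‖Y - X‖ (H Y ^ (-(s / N))) ^ (-(N / p))) := by
          refine lintegral_congr fun X => ?_
          rw [← ENNReal.ofReal_mul hpos.le, norm_sub_rev Y X]
      _ ≤ ENNReal.ofReal (H Y) * ENNReal.ofReal (C2 * (H Y ^ (-(s / N))) ^ (-lam + N - N / p)) := by
          rw [lintegral_const_mul' _ _ ENNReal.ofReal_ne_top]; gcongr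
      _ = _ := by
          rw [← ENNReal.ofReal_mul hpos.le, ← Real.rpow_mul hpos.le]
          congr 1
          have e : -(s / N) * (-lam + N - N / p) = s - 1 := by
            rw [hl, his]; field_simp; ring
          rw [e, Real.rpow_sub_one hpos.ne']; field_simp
  · refine Filter.Eventually.of_forall fun X => ?_
    filter_upwards [sw_ae_ne hm X] with Y hY
    have hz : 0 < ‖X - Y‖ := norm_pos_iff.2 (sub_ne_zero.2 hY.symm)
    have := sw_hls_pt_s9 hp1 hs1 hN0 (hF0 X) (hH0 Y) hz
    rw [← his, ← hbal] at this
    exact this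


lemma sw_kernel (n m : ℕ) (hm : 1 ≤ m) (lam p q s α β : ℝ)
    (hlam0 : 0 < lam) (hlam1 : lam < (n : ℝ) + m)
    (hp1 : 1 < p) (hpq : p ≤ q) (hqs : q.HolderConjugate s)
    (hα : α < m * (1 - 1 / p)) (hβ : β < m / q) (hαβ : 0 ≤ α + β)
    (hbal : α + β + lam = ((n : ℝ) + m) * (1 - 1 / p + 1 / q)) :
    SWNB (volume : Measure (SWE n m)) p s
      (fun X Y => ‖X.2‖ ^ (-α) * ‖Y.2‖ ^ (-β) * ‖X - Y‖ ^ (-lam)) := by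
  have hfar := sw_far_s9 n m hm lam p q s α β hp1 hpq hqs hα hβ hbal
  have hae := sw_ae_snd (n := n) hm
  have hMm := swM_meas n m
  have hM0 : ∀ X Y : SWE n m, 0 ≤ swM X Y := fun X Y => le_max_of_le_right (norm_nonneg _)
  have h2 : ∀ X Y : SWE n m, ‖X.2 - Y.2‖ ≤ ‖X - Y‖ := fun X Y => norm_snd_le (X - Y)
  have h1 : ∀ X Y : SWE n m, ‖X.1 - Y.1‖ ≤ ‖X - Y‖ := fun X Y => norm_fst_le (X - Y)
  have hfarpt : ∀ X Y : SWE n m, X.2 ≠ 0 → ‖X.2‖ / 2 < ‖X - Y‖ →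
      ‖X.2‖ ^ (-α) * ‖Y.2‖ ^ (-β) * ‖X - Y‖ ^ (-lam)
        ≤ 3 ^ lam * (‖X.2‖ ^ (-α) * ‖Y.2‖ ^ (-β) * swM X Y ^ (-lam)) := by
    intro X Y hX h
    have hx : 0 < ‖X.2‖ := norm_pos_iff.2 hX
    have hMp : 0 < swM X Y := lt_max_of_lt_right hx
    have hM : swM X Y ≤ 3 * ‖X - Y‖ := by
      have a1 := h1 X Y
      have a2 := h2 X Y
      have a3 : ‖Y.2‖ ≤ ‖X.2‖ + ‖X.2 - Y.2‖ := by
        have := norm_sub_le X.2 (X.2 - Y.2)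
        rwa [_root_.sub_sub_cancel] at this
      have a4 := norm_nonneg (X - Y)
      refine max_le (max_le ?_ ?_) ?_ <;> linarith
    have : ‖X - Y‖ ^ (-lam) ≤ 3 ^ lam * swM X Y ^ (-lam) := by
      have e : (3:ℝ) ^ lam * swM X Y ^ (-lam) = (swM X Y / 3) ^ (-lam) := by
        rw [Real.div_rpow hMp.le (by norm_num), Real.rpow_neg (by norm_num : (0:ℝ) ≤ 3)]
        field_simp
      rw [e]
      exact Real.rpow_le_rpow_of_nonpos (by positivity) (by linarith) (by linarith)
    calc _ ≤ ‖X.2‖ ^ (-α) * ‖Y.2‖ ^ (-β) * (3 ^ lam * swM X Y ^ (-lam)) := by gcongr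
      _ = _ := by ring
  have hnearpt : ∀ X Y : SWE n m, X.2 ≠ 0 → ‖X - Y‖ ≤ ‖X.2‖ / 2 →
      ‖X.2‖ / 2 ≤ ‖Y.2‖ ∧ ‖Y.2‖ ≤ 2 * ‖X.2‖ ∧ ‖X.2‖ ^ (-α) * ‖Y.2‖ ^ (-β) * ‖X - Y‖ ^ (-lam)
        ≤ 2 ^ |(-β)| * (‖X - Y‖ ^ (-lam) * ‖X.2‖ ^ (-(α + β))) := by
    intro X Y hX h
    have hx : 0 < ‖X.2‖ := norm_pos_iff.2 hX
    have a2 := h2 X Y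
    have a3 : ‖Y.2‖ ≤ ‖X.2‖ + ‖X.2 - Y.2‖ := by
      have := norm_sub_le X.2 (X.2 - Y.2)
      rwa [_root_.sub_sub_cancel] at this
    have a4 : ‖X.2‖ - ‖Y.2‖ ≤ ‖X.2 - Y.2‖ := norm_sub_norm_le _ _
    have c1 : ‖X.2‖ / 2 ≤ ‖Y.2‖ := by linarith
    have c2 : ‖Y.2‖ ≤ 2 * ‖X.2‖ := by linarith
    refine ⟨c1, c2, ?_⟩
    have := sw_comparable (e := -β) hx c1 c2
    have e : ‖X.2‖ ^ (-(α + β)) = ‖X.2‖ ^ (-α) * ‖X.2‖ ^ (-β) := by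
      rw [← Real.rpow_add hx]; congr 1; ring
    rw [e]
    calc _ ≤ ‖X.2‖ ^ (-α) * (2 ^ |(-β)| * ‖X.2‖ ^ (-β)) * ‖X - Y‖ ^ (-lam) := by gcongr
      _ = _ := by ring
  rcases hαβ.eq_or_lt with h0 | hpos
  · have hnear := sw_near2 n m hm lam p q s hlam1 hp1 hqs (by rw [← hbal, ← h0]; ring)
    refine SWNB.add_of_le (3 ^ lam) (2 ^ |(-β)|) (by positivity) (by positivity) hfar hnear ?_ ?_
      ?_ ?_ ?_
    · simp only [Function.uncurry_def]; fun_prop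
    · simp only [Function.uncurry_def]; fun_prop
    · intro X Y; have := hM0 X Y; positivity
    · intro X Y; positivity
    · filter_upwards [hae] with X hX
      refine Filter.Eventually.of_forall fun Y => ?_
      have := hM0 X Y
      rcases lt_or_ge (‖X.2‖ / 2) ‖X - Y‖ with h | h
      · exact (hfarpt X Y hX h).trans (le_add_of_nonneg_right (by positivity))
      · have := (hnearpt X Y hX h).2.2
        rw [← h0, neg_zero, Real.rpow_zero, mul_one] at this
        exact this.trans (le_add_of_nonneg_left (by positivity))
  · have hnear := sw_near1 n m hm lam p q s (α + β) hp1 hpq hqs hpos hbal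
    set γ := α + β with hγ
    refine SWNB.add_of_le (3 ^ lam) (2 ^ |(-β)| * 2 ^ (4 * γ)) (by positivity) (by positivity)
      hfar hnear ?_ ?_ ?_ ?_ ?_
    · simp only [Function.uncurry_def]; fun_prop
    · simp only [Function.uncurry_def]; fun_prop
    · intro X Y; have := hM0 X Y; positivity
    · intro X Y; positivity
    · filter_upwards [hae] with X hX
      refine Filter.Eventually.of_forall fun Y => ?_
      have := hM0 X Y
      rcases lt_or_ge (‖X.2‖ / 2) ‖X - Y‖ with h | h
      · exact (hfarpt X Y hX h).trans (le_add_of_nonneg_right (by positivity))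
      · obtain ⟨c1, c2, c3⟩ := hnearpt X Y hX h
        refine le_trans ?_ (le_add_of_nonneg_left (by positivity))
        refine c3.trans ?_
        have hx : 0 < ‖X.2‖ := norm_pos_iff.2 hX
        have hW : 0 < max ‖X - Y‖ (max ‖X.2‖ ‖Y.2‖) :=
          lt_max_of_lt_right (lt_max_of_lt_left hx)
        have i1 : (2 * ‖X.2‖) ^ (-(3 * γ)) ≤ max ‖X - Y‖ (max ‖X.2‖ ‖Y.2‖) ^ (-(3 * γ)) :=
          Real.rpow_le_rpow_of_nonpos hW
            (max_le (by linarith) (max_le (by linarith) c2)) (by linarith)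
        have i2 : (‖X.2‖ / 2) ^ γ ≤ ‖Y.2‖ ^ γ := Real.rpow_le_rpow (by positivity) c1 hpos.le
        have e : ‖X.2‖ ^ (-γ) = 2 ^ (4 * γ) *
            (‖X.2‖ ^ γ * (‖X.2‖ / 2) ^ γ * (2 * ‖X.2‖) ^ (-(3 * γ))) := by
          rw [Real.div_rpow hx.le (by norm_num), Real.mul_rpow (by norm_num) hx.le, div_eq_mul_inv,
            ← Real.rpow_neg (by norm_num)]
          have e1 : ‖X.2‖ ^ (-γ) = ‖X.2‖ ^ γ * ‖X.2‖ ^ γ * ‖X.2‖ ^ (-(3 * γ)) := by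
            rw [← Real.rpow_add hx, ← Real.rpow_add hx]; congr 1; ring
          have e2 : (2:ℝ) ^ (4 * γ) * 2 ^ (-γ) * 2 ^ (-(3 * γ)) = 1 := by
            rw [← Real.rpow_add (by norm_num), ← Real.rpow_add (by norm_num)]
            have : 4 * γ + -γ + -(3 * γ) = 0 := by ring
            rw [this, Real.rpow_zero]
          rw [e1]
          linear_combination (-(‖X.2‖ ^ γ * ‖X.2‖ ^ γ * ‖X.2‖ ^ (-(3 * γ)))) * e2
        rw [e]
        calc _ ≤ 2 ^ |(-β)| * (‖X - Y‖ ^ (-lam) * (2 ^ (4 * γ) *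
            (‖X.2‖ ^ γ * ‖Y.2‖ ^ γ * max ‖X - Y‖ (max ‖X.2‖ ‖Y.2‖) ^ (-(3 * γ))))) := by
              gcongr
          _ = _ := by ring

lemma sw_norm_le_pDist {n m : ℕ} (X Y : SWE n m) : ‖X - Y‖ ≤ pDist X Y := by
  rw [Prod.norm_def]
  unfold pDist
  refine max_le ?_ ?_
  · exact Real.le_sqrt_of_sq_le (by simp only [Prod.fst_sub]; nlinarith [sq_nonneg ‖X.2 - Y.2‖])
  · exact Real.le_sqrt_of_sq_le (by simp only [Prod.snd_sub]; nlinarith [sq_nonneg ‖X.1 - Y.1‖])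

/-- Dual form of the Stein–Weiss type inequality on `ℝ^{n+m}`. -/
theorem steinWeiss_Rnm_dual
    (n m : ℕ) (hm : 1 ≤ m) (lam p q α β : ℝ)
    (hlam0 : 0 < lam) (hlam1 : lam < (n : ℝ) + m)
    (hp1 : 1 < p) (hpq : p ≤ q)
    (hα : α < m * (1 - 1 / p)) (hβ : β < m / q) (hαβ : 0 ≤ α + β)
    (hbal : 1 / q = 1 / p - ((n : ℝ) + m - (α + β + lam)) / ((n : ℝ) + m)) :
    ∃ C : ℝ, 0 < C ∧
      ∀ f : EuclideanSpace ℝ (Fin n) × EuclideanSpace ℝ (Fin m) → ℝ,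
        Measurable f → (∀ X, 0 ≤ f X) →
        (∫⁻ Y, ENNReal.ofReal ‖Y.2‖ ^ (-(β * q)) * Ilam n m lam f Y ^ q) ^ (1 / q)
          ≤ ENNReal.ofReal C *
            (∫⁻ X, ENNReal.ofReal ‖X.2‖ ^ (α * p) * ENNReal.ofReal (f X) ^ p) ^ (1 / p) := by
  have hp0 : 0 < p := by linarith
  have hq1 : 1 < q := by linarith
  have hq0 : 0 < q := by linarith
  have hqs : q.HolderConjugate (Real.conjExponent q) := Real.HolderConjugate.conjExponent hq1
  have hN0 : 0 < (n : ℝ) + m := by linarith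
  have hbal' : α + β + lam = ((n : ℝ) + m) * (1 - 1 / p + 1 / q) := by
    rw [hbal]; field_simp; ring
  have hNB := sw_kernel n m hm lam p q _ α β hlam0 hlam1 hp1 hpq hqs hα hβ hαβ hbal'
  obtain ⟨C, hC, h⟩ := hNB.strong hp0 hqs (by simp only [Function.uncurry_def]; fun_prop)
  have hae := sw_ae_snd (n := n) hm
  refine ⟨C, hC, fun f hf hf0 => ?_⟩
  have key := h (fun X => ‖X.2‖ ^ α * f X) (by fun_prop)
    (fun X => mul_nonneg (by positivity) (hf0 X))
  have eR : ∫⁻ X : SWE n m, ENNReal.ofReal ((‖X.2‖ ^ α * f X) ^ p)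
      = ∫⁻ X : SWE n m, ENNReal.ofReal ‖X.2‖ ^ (α * p) * ENNReal.ofReal (f X) ^ p := by
    refine lintegral_congr_ae ?_
    filter_upwards [hae] with X hX
    have hx : 0 < ‖X.2‖ := norm_pos_iff.2 hX
    rw [Real.mul_rpow (by positivity) (hf0 X), ← Real.rpow_mul hx.le,
      ENNReal.ofReal_mul (by positivity), ENNReal.ofReal_rpow_of_pos hx,
      ENNReal.ofReal_rpow_of_nonneg (hf0 X) hp0.le]
  rw [eR] at key
  refine le_trans ?_ key
  refine ENNReal.rpow_le_rpow ?_ (by positivity)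
  refine lintegral_mono_ae ?_
  filter_upwards [hae] with Y hY
  have hy : 0 < ‖Y.2‖ := norm_pos_iff.2 hY
  have e1 : ENNReal.ofReal ‖Y.2‖ ^ (-(β * q)) = (ENNReal.ofReal (‖Y.2‖ ^ (-β))) ^ q := by
    rw [← ENNReal.ofReal_rpow_of_pos hy, ← ENNReal.rpow_mul]; congr 1; ring
  rw [e1, ← ENNReal.mul_rpow_of_nonneg _ _ hq0.le]
  refine ENNReal.rpow_le_rpow ?_ hq0.le
  unfold Ilam
  rw [← lintegral_const_mul' _ _ ENNReal.ofReal_ne_top]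
  refine lintegral_mono_ae ?_
  filter_upwards [hae, sw_ae_ne hm Y] with X hX hXY
  have hx : 0 < ‖X.2‖ := norm_pos_iff.2 hX
  have hz : 0 < ‖X - Y‖ := norm_pos_iff.2 (sub_ne_zero.2 hXY)
  have hzd := sw_norm_le_pDist X Y
  have hd : 0 < pDist X Y := lt_of_lt_of_le hz hzd
  rw [ENNReal.ofReal_rpow_of_pos hd, ← ENNReal.ofReal_mul (hf0 X),
    ← ENNReal.ofReal_mul (by positivity)]
  apply ENNReal.ofReal_le_ofReal
  have i : pDist X Y ^ (-lam) ≤ ‖X - Y‖ ^ (-lam) :=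
    Real.rpow_le_rpow_of_nonpos hz hzd (by linarith)
  have := hf0 X
  calc ‖Y.2‖ ^ (-β) * (f X * pDist X Y ^ (-lam)) ≤ ‖Y.2‖ ^ (-β) * (f X * ‖X - Y‖ ^ (-lam)) := by
        gcongr
    _ = ‖X.2‖ ^ α * f X * (‖X.2‖ ^ (-α) * ‖Y.2‖ ^ (-β) * ‖X - Y‖ ^ (-lam)) := by
        rw [Real.rpow_neg hx.le α]; field_simp
end
end
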